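/- Let M be a compact connected boundaryless topological manifold of dimension n with a compatible metric and let f : M → M be an expansive homeomorphism. Then for every p ∈ Per_H there exist open neighborhoods V₁ and V₂ of p such that for every q ∈ Per_H ∩ V₁ one has S_q ∩ U_p ≠ ∅ and U_q ∩ S_p ≠ ∅, where for z ∈ M we write S_z = cc_z(W^s(z) ∩ V₂) and U_z = cc_z(W^u(z) ∩ V₂). -/

import Mathlib

open Metric Set

variable {M : Type*} [MetricSpace M]

/-- Iterates of a homeomorphism, indexed by `ℤ`. -/
def iterZ (f : M ≃ₜ M) (k : ℤ) (x : M) : M := (f.toEquiv ^ k) x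

/-- `f` is expansive with expansivity constant `α`. -/
def IsExpansive (f : M ≃ₜ M) (α : ℝ) : Prop :=
  ∀ x y : M, x ≠ y → ∃ k : ℤ, α < dist (iterZ f k x) (iterZ f k y)

/-- Stable set of `x`. -/
def Ws (f : M ≃ₜ M) (x : M) : Set M :=
  {y | Filter.Tendsto (fun k : ℤ => dist (iterZ f k x) (iterZ f k y)) Filter.atTop (nhds 0)}

/-- Unstable set of `x`. -/
def Wu (f : M ≃ₜ M) (x : M) : Set M :=
  {y | Filter.Tendsto (fun k : ℤ => dist (iterZ f k x) (iterZ f k y)) Filter.atBot (nhds 0)}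

/-- Local (`ε`-local) stable set of `x`. -/
def WsLoc (f : M ≃ₜ M) (ε : ℝ) (x : M) : Set M :=
  {y | ∀ k : ℤ, 0 ≤ k → dist (iterZ f k x) (iterZ f k y) ≤ ε}

/-- Local (`ε`-local) unstable set of `x`. -/
def WuLoc (f : M ≃ₜ M) (ε : ℝ) (x : M) : Set M :=
  {y | ∀ k : ℤ, k ≤ 0 → dist (iterZ f k x) (iterZ f k y) ≤ ε}

/-- The model space `ℝ^r × ℝ^{n-r}`. -/
abbrev ModelSp (n r : ℕ) := (Fin r → ℝ) × (Fin (n - r) → ℝ)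

/-- The model hyperbolic linear map `L(a,b) = (a/2, 2b)`. -/
noncomputable def modelL (n r : ℕ) : ModelSp n r → ModelSp n r :=
  fun q => (fun i => q.1 i / 2, fun i => 2 * q.2 i)

/-- Topologically hyperbolic periodic points of index `r` (`Per_H^r`). -/
def PerHr (f : M ≃ₜ M) (n r : ℕ) : Set M :=
  {p | ∃ l : ℕ, 1 ≤ l ∧ (f.toEquiv ^ l) p = p ∧
    ∃ (U : Set M) (V : Set (ModelSp n r)) (h : U ≃ₜ V),
      IsOpen U ∧ IsOpen V ∧ (0 : ModelSp n r) ∈ V ∧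
      ∃ hp : p ∈ U, ((h ⟨p, hp⟩ : V) : ModelSp n r) = 0 ∧
        ∀ z : M, ∀ hz : z ∈ U, ∀ hz' : (f.toEquiv ^ l) z ∈ U,
          ((h ⟨(f.toEquiv ^ l) z, hz'⟩ : V) : ModelSp n r) = modelL n r (h ⟨z, hz⟩)}

/-- All topologically hyperbolic periodic points (`Per_H`). -/
def PerH (f : M ≃ₜ M) (n : ℕ) : Set M := ⋃ r ∈ Finset.range (n + 1), PerHr f n r

/-- `p` admits a local product structure. -/
def AdmitsLPS (f : M ≃ₜ M) (n : ℕ) (p : M) : Prop :=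
  ∃ (k : ℕ) (h : (Fin k → ℝ) × (Fin (n - k) → ℝ) → M) (ε : ℝ),
    0 < ε ∧ Topology.IsEmbedding h ∧ p ∈ Set.range h ∧
    ∀ x : Fin k → ℝ, ∀ y : Fin (n - k) → ℝ,
      h '' ({x} ×ˢ univ) = WsLoc f ε (h (x, y)) ∩ Set.range h ∧
      h '' (univ ×ˢ {y}) = WuLoc f ε (h (x, y)) ∩ Set.range h

section Degree
open MeasureTheory Filter Topology
open scoped Pointwise

theorem scale_det_integral {E : Type*} [NormedAddCommGroup E] [NormedSpace ℝ E]
    [FiniteDimensional ℝ E] [MeasurableSpace E] [BorelSpace E] (μ : Measure E)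
    [μ.IsAddHaarMeasure] (u : E → E) (hu : ContDiff ℝ 1 u) (R : ℝ)
    (hR : ∀ x, x ∉ closedBall (0 : E) R → u x = 0) (hc : HasCompactSupport u) :
    ∃ s₀ : ℝ, 0 < s₀ ∧ ∀ s, s₀ < s →
      ∫ x in closedBall (0 : E) R, (s • ContinuousLinearMap.id ℝ E - fderiv ℝ u x).det ∂μ
        = s ^ (Module.finrank ℝ E) * μ.real (closedBall (0 : E) R) := by
  have hdc : Continuous (fderiv ℝ u) := hu.continuous_fderiv one_ne_zero
  obtain ⟨C, hC⟩ : ∃ C, ∀ x, ‖fderiv ℝ u x‖ ≤ C :=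
    (hc.fderiv (𝕜 := ℝ)).exists_bound_of_continuous hdc
  have hdet : ∀ᶠ B : E →L[ℝ] E in 𝓝 0, 0 < (ContinuousLinearMap.id ℝ E - B).det := by
    have h1 : Continuous fun B : E →L[ℝ] E => (ContinuousLinearMap.id ℝ E - B).det :=
      ContinuousLinearMap.continuous_det.comp (continuous_const.sub continuous_id)
    have h2 : (0:ℝ) < (ContinuousLinearMap.id ℝ E - 0).det := by
      simp [ContinuousLinearMap.det]
    exact h1.continuousAt.eventually (lt_mem_nhds h2)
  obtain ⟨κ, hκ, hκ'⟩ := Metric.eventually_nhds_iff.1 hdet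
  have hC0 : 0 ≤ C := (norm_nonneg _).trans (hC 0)
  refine ⟨C + C / κ + 1, by positivity, fun s hs => ?_⟩
  have hCκ : 0 ≤ C / κ := by positivity
  have hs0 : 0 < s := by linarith
  have hsC : C < s := by linarith
  have hsκ : C / s < κ := by
    rw [div_lt_iff₀ hs0]
    have : C / κ < s := by linarith
    rwa [div_lt_iff₀ hκ, mul_comm] at this
  have hpos : ∀ x, 0 < (s • ContinuousLinearMap.id ℝ E - fderiv ℝ u x).det := by
    intro x
    have e1 : s • ContinuousLinearMap.id ℝ E - fderiv ℝ u x
        = s • (ContinuousLinearMap.id ℝ E - s⁻¹ • fderiv ℝ u x) := by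
      rw [smul_sub, smul_inv_smul₀ hs0.ne']
    have h3 := hκ' (y := s⁻¹ • fderiv ℝ u x) (by
      rw [dist_zero_right, norm_smul, norm_inv, Real.norm_of_nonneg hs0.le]
      calc s⁻¹ * ‖fderiv ℝ u x‖ ≤ s⁻¹ * C := by gcongr; exact hC x
        _ = C / s := by ring
        _ < κ := hsκ)
    rw [e1]
    simp only [ContinuousLinearMap.det, ContinuousLinearMap.toLinearMap_smul, LinearMap.det_smul] at h3 ⊢
    positivity
  have hlip : LipschitzWith (NNReal.mk C hC0) u :=
    lipschitzWith_of_nnnorm_fderiv_le (hu.differentiable one_ne_zero) (fun x => hC x)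
  set G : E → E := fun x => s • x - u x with hG
  have hinj : Function.Injective G := by
    intro x y hxy
    have h1 : s • (x - y) = u x - u y := by
      simp only [hG] at hxy
      rw [smul_sub]; rw [sub_eq_sub_iff_add_eq_add] at hxy ⊢; rw [hxy]; abel
    have h2 := hlip.dist_le_mul x y
    rw [dist_eq_norm, dist_eq_norm, ← h1, norm_smul, Real.norm_of_nonneg hs0.le] at h2
    have h3 : (s - C) * ‖x - y‖ ≤ 0 := by
      have : s * ‖x - y‖ ≤ C * ‖x - y‖ := h2
      linarith
    have h4 : ‖x - y‖ ≤ 0 := by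
      by_contra h
      push Not at h
      have : 0 < (s - C) * ‖x - y‖ := mul_pos (by linarith) h
      linarith
    exact sub_eq_zero.1 (norm_le_zero_iff.1 h4)
  have hsurj : Function.Surjective G := by
    intro y
    have hK : ContractingWith (NNReal.mk (C / s) (by positivity)) (fun x => s⁻¹ • (y + u x)) := by
      refine ⟨?_, LipschitzWith.of_dist_le_mul fun a b => ?_⟩
      · exact (NNReal.coe_lt_coe (r₁ := NNReal.mk (C / s) (by positivity)) (r₂ := 1)).1 ((div_lt_one hs0).2 hsC)
      · rw [dist_smul₀, dist_add_left, norm_inv, Real.norm_of_nonneg hs0.le]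
        have := hlip.dist_le_mul a b
        calc s⁻¹ * dist (u a) (u b) ≤ s⁻¹ * (C * dist a b) := by gcongr; exact this
          _ = C / s * dist a b := by ring
    refine ⟨hK.fixedPoint, ?_⟩
    have h1 := hK.fixedPoint_isFixedPt
    have h2 : s⁻¹ • (y + u hK.fixedPoint) = hK.fixedPoint := h1
    have h3 : s • hK.fixedPoint = y + u hK.fixedPoint := by
      conv_lhs => rw [← h2]
      rw [smul_inv_smul₀ hs0.ne']
    simp only [hG]
    rw [h3]; abel
  have himg : G '' closedBall (0 : E) R = s • closedBall (0 : E) R := by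
    ext y
    constructor
    · rintro ⟨x, hx, rfl⟩
      by_contra hy
      have hz : s⁻¹ • G x ∉ closedBall (0 : E) R := fun h =>
        hy ⟨_, h, by simp only [smul_inv_smul₀ hs0.ne']⟩
      have : G (s⁻¹ • G x) = G x := by
        have h0 := hR _ hz
        calc G (s⁻¹ • G x) = s • (s⁻¹ • G x) - u (s⁻¹ • G x) := rfl
          _ = G x := by rw [h0, sub_zero, smul_inv_smul₀ hs0.ne']
      rw [hinj this] at hz
      exact hz hx
    · rintro ⟨x, hx, rfl⟩
      obtain ⟨z, hz⟩ := hsurj (s • x)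
      by_cases hzQ : z ∈ closedBall (0 : E) R
      · exact ⟨z, hzQ, hz⟩
      · exfalso
        have h1 : G z = s • z := by simp only [hG, hR z hzQ, sub_zero]
        rw [h1] at hz
        have : z = x := smul_right_injective E hs0.ne' hz
        exact hzQ (this ▸ hx)
  have hderiv : ∀ x ∈ closedBall (0 : E) R, HasFDerivWithinAt G
      (s • ContinuousLinearMap.id ℝ E - fderiv ℝ u x) (closedBall (0 : E) R) x := by
    intro x _
    exact (((hasFDerivAt_id x).const_smul s).sub
      ((hu.differentiable one_ne_zero x).hasFDerivAt)).hasFDerivWithinAt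
  have hcv := integral_image_eq_integral_abs_det_fderiv_smul μ
    (isClosed_closedBall.measurableSet) hderiv hinj.injOn (fun _ => (1:ℝ))
  rw [himg] at hcv
  have h5 : ∫ x in closedBall (0 : E) R, (s • ContinuousLinearMap.id ℝ E - fderiv ℝ u x).det ∂μ
      = ∫ x in closedBall (0 : E) R,
        |(s • ContinuousLinearMap.id ℝ E - fderiv ℝ u x).det| • (1:ℝ) ∂μ := by
    congr 1; ext x; rw [abs_of_pos (hpos x)]; simp
  rw [h5, ← hcv, setIntegral_const, Measure.real, Measure.addHaar_smul, Measure.real]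
  simp [abs_of_pos hs0, ENNReal.toReal_mul]
  left; positivity

theorem integral_det_fderiv_eq_zero {E : Type*} [NormedAddCommGroup E] [NormedSpace ℝ E]
    [FiniteDimensional ℝ E] [Nontrivial E] [MeasurableSpace E] [BorelSpace E] (μ : Measure E)
    [μ.IsAddHaarMeasure] (u : E → E) (hu : ContDiff ℝ 1 u) (hc : HasCompactSupport u) :
    ∫ x, (fderiv ℝ u x).det ∂μ = 0 := by
  have hdc : Continuous (fderiv ℝ u) := hu.continuous_fderiv one_ne_zero
  obtain ⟨R, hR⟩ := hc.isCompact.isBounded.subset_closedBall (0:E)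
  have hR' : ∀ x, x ∉ closedBall (0 : E) R → u x = 0 := fun x hx =>
    image_eq_zero_of_notMem_tsupport (fun h => hx (hR h))
  obtain ⟨s₀, hs₀, H⟩ := scale_det_integral μ u hu R hR' hc
  set n := Module.finrank ℝ E with hn
  have hn0 : n ≠ 0 := Module.finrank_pos.ne'
  set v : ℕ → ℝ := fun i => s₀ + 1 + i with hv
  have hvi : Set.InjOn v (Finset.range (n + 1)) := by
    intro a _ b _ hab; simpa [hv] using hab
  have hvs : ∀ i, s₀ < v i := fun i => by
    have : (0:ℝ) ≤ i := Nat.cast_nonneg i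
    simp only [hv]; linarith
  set c : ℕ → ℝ := fun i => (Lagrange.basis (Finset.range (n+1)) v i).eval 0 with hcdef
  -- interpolation identity
  have key : ∀ P : Polynomial ℝ, P.natDegree ≤ n →
      P.eval 0 = ∑ i ∈ Finset.range (n+1), P.eval (v i) * c i := by
    intro P hP
    have h1 : P.degree < (Finset.range (n+1)).card := by
      rw [Finset.card_range]
      exact lt_of_le_of_lt Polynomial.degree_le_natDegree (by exact_mod_cast Nat.lt_succ_of_le hP)
    have h2 := Lagrange.eq_interpolate hvi h1
    conv_lhs => rw [h2]
    rw [Lagrange.interpolate_apply, Polynomial.eval_finsetSum]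
    simp [hcdef]
  have hzero : ∑ i ∈ Finset.range (n+1), (v i) ^ n * c i = 0 := by
    have := key (Polynomial.X ^ n) (by simp)
    simpa [hn0] using this.symm
  have hev : ∀ (A : E →L[ℝ] E) (t : ℝ),
      (A : E →ₗ[ℝ] E).charpoly.eval t = (t • ContinuousLinearMap.id ℝ E - A).det := by
    intro A t
    rw [LinearMap.eval_charpoly]
    simp only [ContinuousLinearMap.det]
    congr 1
  have hpt : ∀ A : E →L[ℝ] E, (-A).det
      = ∑ i ∈ Finset.range (n+1), (v i • ContinuousLinearMap.id ℝ E - A).det * c i := by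
    intro A
    have h1 := key (A : E →ₗ[ℝ] E).charpoly (LinearMap.charpoly_natDegree _).le
    simp only [hev] at h1
    simpa using h1
  have hIntegral : ∫ x in closedBall (0:E) R, (-(fderiv ℝ u x)).det ∂μ = 0 := by
    simp_rw [hpt]
    rw [integral_finsetSum]
    · simp_rw [integral_mul_const, H _ (hvs _)]
      calc _ = (∑ i ∈ Finset.range (n+1), (v i) ^ n * c i) * μ.real (closedBall (0:E) R) := by
            rw [Finset.sum_mul]; refine Finset.sum_congr rfl fun i _ => by ring
        _ = 0 := by rw [hzero, zero_mul]
    · intro i _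
      refine ContinuousOn.integrableOn_compact (isCompact_closedBall _ _) ?_
      exact ((ContinuousLinearMap.continuous_det.comp
        (continuous_const.sub hdc)).mul continuous_const).continuousOn
  have hneg : ∀ A : E →L[ℝ] E, (-A).det = (-1)^n * A.det := by
    intro A
    have : (-A : E →L[ℝ] E) = (-1:ℝ) • A := by simp
    rw [this]
    simp only [ContinuousLinearMap.det, ContinuousLinearMap.toLinearMap_smul, LinearMap.det_smul]
    rfl
  simp_rw [hneg, integral_const_mul] at hIntegral
  have h6 : ∫ x in closedBall (0:E) R, (fderiv ℝ u x).det ∂μ = 0 := by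
    rcases mul_eq_zero.1 hIntegral with h | h
    · exact absurd h (pow_ne_zero _ (by norm_num))
    · exact h
  rw [← h6, setIntegral_eq_integral_of_forall_compl_eq_zero]
  intro x hx
  have : fderiv ℝ u x = 0 :=
    image_eq_zero_of_notMem_tsupport (fun h => hx (hR (tsupport_fderiv_subset ℝ h)))
  rw [this]
  simp only [ContinuousLinearMap.det, ContinuousLinearMap.toLinearMap_zero]
  rw [LinearMap.det_zero]
  exact zero_pow hn0

theorem integral_det_sub_eq_zero {E : Type*} [NormedAddCommGroup E] [NormedSpace ℝ E]
    [FiniteDimensional ℝ E] [Nontrivial E] [MeasurableSpace E] [BorelSpace E] (μ : Measure E)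
    [μ.IsAddHaarMeasure] (F₀ F₁ : E → E) (h₀ : ContDiff ℝ 1 F₀) (h₁ : ContDiff ℝ 1 F₁)
    (K : Set E) (hK : IsCompact K) (heq : ∀ x, x ∉ K → F₀ x = F₁ x) :
    ∫ x, ((fderiv ℝ F₀ x).det - (fderiv ℝ F₁ x).det) ∂μ = 0 := by
  obtain ⟨R, hR0, hR⟩ := hK.isBounded.subset_closedBall_lt 0 (0:E)
  let χ : ContDiffBump (0:E) := ⟨R + 1, R + 2, by linarith, by linarith⟩
  have hχ : ContDiff ℝ 1 χ := χ.contDiff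
  have hcomp : ∀ F : E → E, HasCompactSupport (fun x => χ x • F x) := fun F =>
    χ.hasCompactSupport.smul_right
  have hsm : ∀ F : E → E, ContDiff ℝ 1 F → ContDiff ℝ 1 (fun x => χ x • F x) := fun F hF =>
    hχ.smul hF
  have hIntegral : ∀ F : E → E, ContDiff ℝ 1 F →
      Integrable (fun x => (fderiv ℝ (fun x => χ x • F x) x).det) μ := by
    intro F hF
    refine Continuous.integrable_of_hasCompactSupport
      (ContinuousLinearMap.continuous_det.comp ((hsm F hF).continuous_fderiv one_ne_zero)) ?_
    refine HasCompactSupport.comp_left (g := ContinuousLinearMap.det)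
      ((hcomp F).fderiv (𝕜 := ℝ)) ?_
    simp only [ContinuousLinearMap.det, ContinuousLinearMap.toLinearMap_zero]
    rw [LinearMap.det_zero]
    exact zero_pow Module.finrank_pos.ne'
  have hpt : ∀ x, (fderiv ℝ F₀ x).det - (fderiv ℝ F₁ x).det =
      (fderiv ℝ (fun x => χ x • F₀ x) x).det - (fderiv ℝ (fun x => χ x • F₁ x) x).det := by
    intro x
    by_cases hx : x ∈ K
    · have hb : ∀ F : E → E, fderiv ℝ (fun x => χ x • F x) x = fderiv ℝ F x := by
        intro F
        refine Filter.EventuallyEq.fderiv_eq ?_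
        have : ball (0:E) (R+1) ∈ 𝓝 x := isOpen_ball.mem_nhds
          (lt_of_le_of_lt (mem_closedBall.1 (hR hx)) (by linarith))
        filter_upwards [this] with y hy
        rw [χ.one_of_mem_closedBall (ball_subset_closedBall hy), one_smul]
      rw [hb, hb]
    · have hb : F₀ =ᶠ[𝓝 x] F₁ := by
        filter_upwards [hK.isClosed.isOpen_compl.mem_nhds hx] with y hy using heq y hy
      have hb' : (fun x => χ x • F₀ x) =ᶠ[𝓝 x] (fun x => χ x • F₁ x) := by
        filter_upwards [hb] with y hy; rw [hy]
      rw [hb.fderiv_eq, hb'.fderiv_eq, sub_self, sub_self]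
  simp_rw [hpt]
  rw [integral_sub (hIntegral _ h₀) (hIntegral _ h₁), integral_det_fderiv_eq_zero μ _ (hsm _ h₀) (hcomp _),
    integral_det_fderiv_eq_zero μ _ (hsm _ h₁) (hcomp _), sub_zero]

end Degree
section NoFill
open MeasureTheory Filter Topology

theorem exists_tau (δ : ℝ) (hδ : 0 < δ) : ∃ τ b : ℝ → ℝ, ContDiff ℝ 1 τ ∧
    (∀ s, HasDerivAt τ (b s) s) ∧ (∀ s, 0 ≤ b s) ∧ b 0 = 1 ∧ ∀ s, δ ≤ |s| → b s = 0 := by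
  let B : ContDiffBump (0:ℝ) := ⟨δ / 2, δ, by linarith, by linarith⟩
  have hBc : Continuous B := B.continuous
  have hd : ∀ s, HasDerivAt (fun s => ∫ x in (0:ℝ)..s, B x) (B s) s := fun s =>
    intervalIntegral.integral_hasDerivAt_right (hBc.intervalIntegrable _ _)
      (hBc.stronglyMeasurableAtFilter _ _) hBc.continuousAt
  refine ⟨fun s => ∫ x in (0:ℝ)..s, B x, B, ?_, hd, fun s => B.nonneg, ?_, ?_⟩
  · rw [contDiff_one_iff_deriv]
    refine ⟨fun s => (hd s).differentiableAt, ?_⟩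
    have : deriv (fun s => ∫ x in (0:ℝ)..s, B x) = B := funext fun s => (hd s).deriv
    rw [this]; exact hBc
  · exact B.one_of_mem_closedBall (by simp [B]; linarith)
  · intro s hs
    exact B.zero_of_le_dist (by simpa [B] using hs)

theorem exists_T {ι : Type*} [Fintype ι] (δ : ℝ) (hδ : 0 < δ) :
    ∃ T : (ι → ℝ) → (ι → ℝ), ContDiff ℝ 1 T ∧ (∀ y, 0 ≤ (fderiv ℝ T y).det) ∧
      (fderiv ℝ T 0).det = 1 ∧ ∀ y, δ ≤ ‖y‖ → y ≠ 0 → (fderiv ℝ T y).det = 0 := by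
  classical
  obtain ⟨τ, b, hτ, hd, hb, hb0, hbz⟩ := exists_tau δ hδ
  have hdet : ∀ y : ι → ℝ, (fderiv ℝ (fun y : ι → ℝ => fun i => τ (y i)) y).det = ∏ i, b (y i) := by
    intro y
    have h1 : HasFDerivAt (fun y : ι → ℝ => fun i => τ (y i))
        (ContinuousLinearMap.pi fun i => b (y i) • (ContinuousLinearMap.proj (R := ℝ) (φ := fun _ : ι => ℝ) i)) y := by
      rw [hasFDerivAt_pi]
      intro i
      exact (hd (y i)).comp_hasFDerivAt y (hasFDerivAt_apply i y)
    rw [h1.fderiv, ContinuousLinearMap.det, ← Matrix.det_diagonal, ← LinearMap.det_toLin']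
    congr 1
    ext v i
    simp [Pi.single_apply]
    split_ifs with h <;> simp [h]
  refine ⟨fun y i => τ (y i), ?_, ?_, ?_, ?_⟩
  · exact contDiff_pi.2 fun i => hτ.comp (contDiff_apply ℝ ℝ i)
  · intro y; rw [hdet]; exact Finset.prod_nonneg fun i _ => hb _
  · rw [hdet]; simp [hb0]
  · intro y hy hy0
    rw [hdet]
    by_contra h
    have h2 : ∀ i, |y i| < δ := by
      intro i
      by_contra hi
      exact h (Finset.prod_eq_zero (Finset.mem_univ i) (hbz _ (not_lt.1 hi)))
    exact absurd ((pi_norm_lt_iff hδ).2 h2) (not_lt.2 hy)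

theorem no_fill_pi {ι : Type*} [Fintype ι] (K : Set (ι → ℝ)) (hK : IsCompact K)
    (F P : (ι → ℝ) → (ι → ℝ)) (hF : ContinuousOn F K) (hP : ContinuousOn P K)
    (heq : ∀ x ∈ frontier K, F x = P x) (hP0 : ∀ x ∈ K, P x ≠ 0) (ε : ℝ) (hε : 0 < ε)
    (hball : closedBall 0 ε ⊆ K) (hid : ∀ x ∈ closedBall (0 : ι → ℝ) ε, F x = x)
    (hF0 : ∀ x ∈ K, F x = 0 → x = 0) : False := by
  classical
  cases isEmpty_or_nonempty ι with
  | inl h => exact hP0 0 (hball (mem_closedBall_self hε.le)) (Subsingleton.elim _ _)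
  | inr hne =>
  obtain ⟨P', hP'⟩ := ContinuousMap.exists_restrict_eq hK.isClosed
    (⟨K.domRestrict P, hP.domRestrict⟩ : C(K, ι → ℝ))
  have hP'K : ∀ x ∈ K, P' x = P x := fun x hx => congrArg (fun g : C(K, ι → ℝ) => g ⟨x, hx⟩) hP'
  set D : (ι → ℝ) → (ι → ℝ) := K.indicator (fun x => F x - P x) with hD
  have hDc : Continuous D := continuous_indicator (fun a ha => sub_eq_zero.2 (heq a ha))
    (by rw [hK.isClosed.closure_eq]; exact hF.sub hP)
  have hD0 : ∀ x, x ∉ K → D x = 0 := fun x hx => indicator_of_notMem hx _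
  set F' : (ι → ℝ) → (ι → ℝ) := fun x => P' x + D x with hF'
  have hF'c : Continuous F' := P'.continuous.add hDc
  have hF'K : ∀ x ∈ K, F' x = F x := fun x hx => by
    simp [hF', hD, indicator_of_mem hx, hP'K x hx]
  -- the neighbourhood of K
  have hO : IsOpen {x | P' x ≠ 0} := isOpen_ne_fun P'.continuous continuous_const
  obtain ⟨K', hK', hKK', hK'O⟩ := exists_compact_between hK hO
    (fun x hx => by rw [mem_ofPred_eq, hP'K x hx]; exact hP0 x hx)
  obtain ⟨m, hm, hmP, hmF⟩ : ∃ m, 0 < m ∧ (∀ x ∈ K', 4 * m ≤ ‖P' x‖) ∧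
      (∀ x ∈ K', x ∉ ball (0 : ι → ℝ) (ε/2) → 4 * m ≤ ‖F' x‖) := by
    have h0K : (0 : ι → ℝ) ∈ K' := interior_subset (hKK' (hball (mem_closedBall_self hε.le)))
    obtain ⟨x₁, hx₁, hmin⟩ := hK'.exists_isMinOn ⟨0, h0K⟩ (P'.continuous.norm.continuousOn)
    have h1 : 0 < ‖P' x₁‖ := norm_pos_iff.2 (hK'O hx₁)
    have hKb : IsCompact (K' \ ball (0 : ι → ℝ) (ε/2)) := hK'.diff isOpen_ball
    rcases (K' \ ball (0 : ι → ℝ) (ε/2)).eq_empty_or_nonempty with he | hne'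
    · refine ⟨‖P' x₁‖ / 4, by positivity, fun x hx => ?_, fun x hx hxb => ?_⟩
      · have : ‖P' x₁‖ ≤ ‖P' x‖ := hmin hx
        linarith
      · exact absurd (show x ∈ K' \ ball (0 : ι → ℝ) (ε/2) from ⟨hx, hxb⟩) (by rw [he]; simp)
    · obtain ⟨x₂, hx₂, hmin₂⟩ := hKb.exists_isMinOn hne' hF'c.norm.continuousOn
      have h2 : 0 < ‖F' x₂‖ := by
        rw [norm_pos_iff]
        intro h
        by_cases hx : x₂ ∈ K
        · rw [hF'K _ hx] at h
          have := hF0 _ hx h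
          exact hx₂.2 (by rw [this]; exact mem_ball_self (by positivity))
        · simp only [hF', hD0 _ hx, add_zero] at h
          exact hK'O hx₂.1 h
      refine ⟨min ‖P' x₁‖ ‖F' x₂‖ / 4, by positivity, fun x hx => ?_, fun x hx hxb => ?_⟩
      · have : ‖P' x₁‖ ≤ ‖P' x‖ := hmin hx
        have := min_le_left ‖P' x₁‖ ‖F' x₂‖
        linarith
      · have : ‖F' x₂‖ ≤ ‖F' x‖ := hmin₂ ⟨hx, hxb⟩
        have := min_le_right ‖P' x₁‖ ‖F' x₂‖
        linarith
  obtain ⟨Ft, hFts, hFta, hFte, -⟩ := hF'c.exists_contDiff_approx_and_eqOn 1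
    (ε := fun _ => m) continuous_const (fun _ => hm) (S := closedBall 0 (ε/2)) (U := ball 0 ε)
    isClosed_closedBall (isOpen_ball.mem_nhdsSet.2 (closedBall_subset_ball (by linarith)))
    (contDiffOn_id.congr fun x hx => by
      rw [hF'K x (hball (ball_subset_closedBall hx)), hid x (ball_subset_closedBall hx)]; rfl)
  obtain ⟨Dt, hDts, hDta, hDte, -⟩ := hDc.exists_contDiff_approx_and_eqOn 1
    (ε := fun _ => m) continuous_const (fun _ => hm) (S := (interior K')ᶜ) (U := Kᶜ)
    isOpen_interior.isClosed_compl
    (hK.isClosed.isOpen_compl.mem_nhdsSet.2 (compl_subset_compl.2 hKK'))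
    ((contDiffOn_const (c := (0 : ι → ℝ))).congr fun x hx => hD0 x hx)
  have hFts1 : ContDiff ℝ 1 Ft := hFts
  have hDts1 : ContDiff ℝ 1 Dt := hDts
  have hFid : ∀ x ∈ closedBall (0 : ι → ℝ) (ε/2), Ft x = x := by
    intro x hx
    have hx' : x ∈ closedBall (0 : ι → ℝ) ε := closedBall_subset_closedBall (by linarith) hx
    rw [hFte hx, hF'K x (hball hx'), hid x hx']
  set Pt : (ι → ℝ) → (ι → ℝ) := fun x => Ft x - Dt x with hPt
  have hPts : ContDiff ℝ 1 Pt := hFts1.sub hDts1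
  obtain ⟨T, hT, hTn, hT0, hTz⟩ := exists_T (ι := ι) m hm
  have hagree : ∀ x, x ∉ K' → T (Ft x) = T (Pt x) := by
    intro x hx
    have h1 : x ∉ interior K' := fun h => hx (interior_subset h)
    have h2 : Dt x = 0 := by rw [hDte h1]; exact hD0 x (fun h => h1 (hKK' h))
    simp [hPt, h2]
  have hzero := integral_det_sub_eq_zero (volume : Measure (ι → ℝ)) (fun x => T (Ft x))
    (fun x => T (Pt x)) (hT.comp hFts1) (hT.comp hPts) K' hK' hagree
  have hchain : ∀ G : (ι → ℝ) → (ι → ℝ), ContDiff ℝ 1 G → ∀ x,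
      (fderiv ℝ (fun x => T (G x)) x).det = (fderiv ℝ T (G x)).det * (fderiv ℝ G x).det := by
    intro G hG x
    have := fderiv_comp x (hT.differentiable one_ne_zero (G x)) (hG.differentiable one_ne_zero x)
    rw [show (fun x => T (G x)) = T ∘ G from rfl, this]
    simp [ContinuousLinearMap.det, ContinuousLinearMap.toLinearMap_comp, LinearMap.det_comp]
  have hPz : ∀ x ∈ K', (fderiv ℝ (fun x => T (Pt x)) x).det = 0 := by
    intro x hx
    have h1 := hFta x
    have h2 := hDta x
    have h3 := hmP x hx
    rw [dist_eq_norm] at h1 h2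
    have h4 : P' x = Pt x - (Ft x - F' x) + (Dt x - D x) := by simp only [hPt, hF']; abel
    have h5 : ‖P' x‖ ≤ ‖Pt x‖ + ‖Ft x - F' x‖ + ‖Dt x - D x‖ := by
      conv_lhs => rw [h4]
      exact (norm_add_le _ _).trans (by gcongr; exact norm_sub_le _ _)
    have h6 : m ≤ ‖Pt x‖ := by linarith
    rw [hchain _ hPts, hTz _ h6 (norm_pos_iff.1 (by linarith)), zero_mul]
  have hFz : ∀ x ∈ K', x ∉ ball (0 : ι → ℝ) (ε/2) →
      (fderiv ℝ (fun x => T (Ft x)) x).det = 0 := by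
    intro x hx hxb
    have h1 := hFta x
    have h3 := hmF x hx hxb
    rw [dist_eq_norm] at h1
    have h5 : ‖F' x‖ ≤ ‖Ft x‖ + ‖Ft x - F' x‖ := by
      have : F' x = Ft x - (Ft x - F' x) := by abel
      conv_lhs => rw [this]
      exact norm_sub_le _ _
    have h6 : m ≤ ‖Ft x‖ := by linarith
    rw [hchain _ hFts1, hTz _ h6 (norm_pos_iff.1 (by linarith)), zero_mul]
  have hFb : ∀ x ∈ ball (0 : ι → ℝ) (ε/2), (fderiv ℝ (fun x => T (Ft x)) x).det
      = (fderiv ℝ T x).det := by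
    intro x hx
    have : (fun x => T (Ft x)) =ᶠ[𝓝 x] T := by
      filter_upwards [isOpen_ball.mem_nhds hx] with y hy
      rw [hFid y (ball_subset_closedBall hy)]
    rw [this.fderiv_eq]
  have hballK : ball (0 : ι → ℝ) (ε/2) ⊆ K' := fun x hx =>
    interior_subset (hKK' (hball (closedBall_subset_closedBall (by linarith)
      (ball_subset_closedBall hx))))
  have hoff : ∀ x, x ∉ K' → (fderiv ℝ (fun x => T (Ft x)) x).det
      - (fderiv ℝ (fun x => T (Pt x)) x).det = 0 := by
    intro x hx
    have : (fun x => T (Ft x)) =ᶠ[𝓝 x] (fun x => T (Pt x)) := by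
      filter_upwards [hK'.isClosed.isOpen_compl.mem_nhds hx] with y hy using hagree y hy
    rw [this.fderiv_eq, sub_self]
  have hcont : Continuous fun x => (fderiv ℝ (fun x => T (Ft x)) x).det
      - (fderiv ℝ (fun x => T (Pt x)) x).det :=
    (ContinuousLinearMap.continuous_det.comp
      ((hT.comp hFts1).continuous_fderiv one_ne_zero)).sub
    (ContinuousLinearMap.continuous_det.comp ((hT.comp hPts).continuous_fderiv one_ne_zero))
  have hpos := hcont.integral_pos_of_hasCompactSupport_nonneg_nonzero
    (μ := (volume : Measure (ι → ℝ))) (x := 0)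
    (HasCompactSupport.intro hK' hoff) ?_ ?_
  · exact absurd hzero hpos.ne'
  · intro x
    by_cases hx : x ∈ K'
    · by_cases hxb : x ∈ ball (0 : ι → ℝ) (ε/2)
      · simp only [hPz x hx, hFb x hxb, sub_zero]; exact hTn x
      · simp [hPz x hx, hFz x hx hxb]
    · simp [hoff x hx]
  · have h0 : (0 : ι → ℝ) ∈ ball (0 : ι → ℝ) (ε/2) := mem_ball_self (by positivity)
    rw [hPz 0 (hballK h0), hFb 0 h0, hT0]; simp

theorem no_fill {E : Type*} [NormedAddCommGroup E] [NormedSpace ℝ E] [FiniteDimensional ℝ E]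
    (K : Set E) (hK : IsCompact K)
    (F P : E → E) (hF : ContinuousOn F K) (hP : ContinuousOn P K)
    (heq : ∀ x ∈ frontier K, F x = P x) (hP0 : ∀ x ∈ K, P x ≠ 0)
    (h0K : K ∈ 𝓝 (0:E)) (hid : ∀ᶠ x in 𝓝 (0:E), F x = x)
    (hF0 : ∀ x ∈ K, F x = 0 → x = 0) : False := by
  obtain ⟨L⟩ : Nonempty (E ≃L[ℝ] (Fin (Module.finrank ℝ E) → ℝ)) :=
    ⟨ContinuousLinearEquiv.ofFinrankEq (by simp)⟩
  have hcs : Tendsto L.symm (𝓝 0) (𝓝 0) := by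
    simpa using (L.symm.continuous.tendsto 0)
  obtain ⟨ε, hε, hε'⟩ := Metric.nhds_basis_closedBall.eventually_iff.1
    (hcs.eventually (hid.and h0K))
  have hmaps : MapsTo L.symm (L.symm ⁻¹' K) K := fun x hx => hx
  refine no_fill_pi (L.symm ⁻¹' K) (L.symm.toHomeomorph.isCompact_preimage.2 hK)
    (fun x => L (F (L.symm x))) (fun x => L (P (L.symm x)))
    (L.continuous.comp_continuousOn (hF.comp L.symm.continuous.continuousOn hmaps))
    (L.continuous.comp_continuousOn (hP.comp L.symm.continuous.continuousOn hmaps))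
    ?_ ?_ ε hε ?_ ?_ ?_
  · intro x hx
    have : frontier (L.symm ⁻¹' K) = L.symm ⁻¹' frontier K :=
      (L.symm.toHomeomorph.preimage_frontier K).symm
    rw [this] at hx
    simp only [heq _ hx]
  · intro x hx h
    exact hP0 _ hx (by simpa using h)
  · exact fun x hx => (hε' hx).2
  · intro x hx
    simp only [(hε' hx).1, L.apply_symm_apply]
  · intro x hx h
    have := hF0 _ hx (by simpa using h)
    simpa using this

end NoFill
section HomotopyZero
open Filter Topology

theorem homotopy_zero {E E' : Type*} [NormedAddCommGroup E] [NormedSpace ℝ E]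
    [FiniteDimensional ℝ E] [NormedAddCommGroup E'] [NormedSpace ℝ E']
    (K : Set E) (hK : IsCompact K)
    (Φ : ℝ → E → E') (hΦ : ContinuousOn (fun z : ℝ × E => Φ z.1 z.2) (Icc 0 1 ×ˢ K))
    (hb : ∀ t ∈ Icc (0:ℝ) 1, ∀ x ∈ frontier K, Φ t x ≠ 0)
    (h0 : ∀ x ∈ K, Φ 0 x = 0 → x = 0)
    (Θ : ℝ → E → E') (r : ℝ) (hr : 0 < r) (hrK : closedBall (0:E) r ⊆ K)
    (hΘ : ContinuousOn (fun z : ℝ × E => Θ z.1 z.2) (Icc 0 1 ×ˢ closedBall 0 r))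
    (hΘ0 : ∀ x ∈ closedBall (0:E) r, Θ 0 x = Φ 0 x)
    (hΘz : ∀ t ∈ Icc (0:ℝ) 1, ∀ x ∈ closedBall (0:E) r, Θ t x = 0 → x = 0)
    (hΘ1 : Θ 1 0 = 0)
    (J : E' → E) (η : ℝ) (hη : 0 < η) (hJ : ContinuousOn J (closedBall 0 η))
    (hJ0 : ∀ v ∈ closedBall (0:E') η, J v = 0 → v = 0)
    (hJΘ : ∀ᶠ x in 𝓝 (0:E), J (Θ 1 x) = x) : ∃ x ∈ K, Φ 1 x = 0 := by
  by_contra hno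
  push Not at hno
  -- the radial retraction
  set Rt : E' → E' := fun v => (η / max η ‖v‖) • v with hRt
  have hmax : ∀ v : E', 0 < max η ‖v‖ := fun v => lt_of_lt_of_le hη (le_max_left _ _)
  have hRc : Continuous Rt := by
    refine Continuous.smul (continuous_const.div (continuous_const.max continuous_norm)
      (fun v => (hmax v).ne')) continuous_id
  have hRm : ∀ v, Rt v ∈ closedBall (0:E') η := by
    intro v
    rw [mem_closedBall_zero_iff, hRt]
    simp only [norm_smul, Real.norm_of_nonneg (div_pos hη (hmax v)).le]
    rw [div_mul_eq_mul_div, div_le_iff₀ (hmax v)]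
    gcongr
    exact le_max_right _ _
  have hRid : ∀ v ∈ closedBall (0:E') η, Rt v = v := by
    intro v hv
    rw [mem_closedBall_zero_iff] at hv
    simp only [hRt, max_eq_left hv, div_self hη.ne', one_smul]
  have hR0 : ∀ v, Rt v = 0 → v = 0 := by
    intro v hv
    rcases smul_eq_zero.1 hv with h | h
    · exact absurd h (div_pos hη (hmax v)).ne'
    · exact h
  have hJR : Continuous (fun v => J (Rt v)) :=
    hJ.comp_continuous hRc hRm
  have hJR0 : ∀ v, J (Rt v) = 0 → v = 0 := fun v hv => hR0 v (hJ0 _ (hRm v) hv)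
  -- inner cutoff
  set l : E → ℝ := fun x => max 0 (min 1 (2 - 2 * ‖x‖ / r)) with hl
  have hlc : Continuous l := by fun_prop
  have hlI : ∀ x, l x ∈ Icc (0:ℝ) 1 := fun x =>
    ⟨le_max_left _ _, max_le zero_le_one (min_le_left _ _)⟩
  have hl1 : ∀ x, ‖x‖ ≤ r / 2 → l x = 1 := by
    intro x hx
    have : 2 * ‖x‖ / r ≤ 1 := by rw [div_le_one hr]; linarith
    simp only [hl]
    rw [min_eq_left (by linarith), max_eq_right zero_le_one]
  have hl0 : ∀ x, r ≤ ‖x‖ → l x = 0 := by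
    intro x hx
    have : 2 ≤ 2 * ‖x‖ / r := by rw [le_div_iff₀ hr]; linarith
    simp only [hl]
    exact max_eq_left ((min_le_right _ _).trans (by linarith))
  set Φ' : E → E' := fun x => if ‖x‖ ≤ r then Θ (l x) x else Φ 0 x with hΦ'
  have hΦ'in : ∀ x ∈ closedBall (0:E) r, Φ' x = Θ (l x) x := by
    intro x hx
    rw [mem_closedBall_zero_iff] at hx
    simp only [hΦ', if_pos hx]
  have hΦ'out : ∀ x, r ≤ ‖x‖ → Φ' x = Φ 0 x := by
    intro x hx
    by_cases h : ‖x‖ ≤ r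
    · simp only [hΦ', if_pos h, hl0 x hx]
      exact hΘ0 x (mem_closedBall_zero_iff.2 h)
    · simp only [hΦ', if_neg h]
  have hΦ'c : ContinuousOn Φ' K := by
    have hKeq : K = closedBall (0:E) r ∪ (K ∩ {x | r ≤ ‖x‖}) := by
      ext x
      constructor
      · intro hx
        rcases le_total ‖x‖ r with h | h
        · exact Or.inl (mem_closedBall_zero_iff.2 h)
        · exact Or.inr ⟨hx, h⟩
      · rintro (h | h)
        · exact hrK h
        · exact h.1
    rw [hKeq]
    refine ContinuousOn.union_of_isClosed ?_ ?_ isClosed_closedBall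
      (hK.isClosed.inter (isClosed_le continuous_const continuous_norm))
    · refine ContinuousOn.congr ?_ hΦ'in
      exact hΘ.comp (f := fun x => (l x, x)) (hlc.prodMk continuous_id).continuousOn
        (fun x hx => ⟨hlI x, hx⟩)
    · refine ContinuousOn.congr ?_ (fun x hx => hΦ'out x hx.2)
      exact hΦ.comp (f := fun x => ((0:ℝ), x)) (continuous_const.prodMk continuous_id).continuousOn
        (fun x hx => ⟨⟨le_rfl, zero_le_one⟩, hx.1⟩)
  have hΦ'z : ∀ x ∈ K, Φ' x = 0 → x = 0 := by
    intro x hx h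
    rcases le_total ‖x‖ r with h' | h'
    · have hx' := mem_closedBall_zero_iff.2 h'
      rw [hΦ'in x hx'] at h
      exact hΘz _ (hlI x) x hx' h
    · rw [hΦ'out x h'] at h
      exact h0 x hx h
  have hfr : ∀ x ∈ frontier K, Φ' x = Φ 0 x := by
    intro x hx
    refine hΦ'out x ?_
    by_contra h
    push Not at h
    have : x ∈ interior K := interior_maximal (ball_subset_closedBall.trans hrK) isOpen_ball
      (mem_ball_zero_iff.2 h)
    exact hx.2 this
  -- outer cutoff
  have hcl : IsClosed ((Icc (0:ℝ) 1 ×ˢ K) ∩ (fun z : ℝ × E => Φ z.1 z.2) ⁻¹' {0}) :=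
    hΦ.preimage_isClosed_of_isClosed (isClosed_Icc.prod hK.isClosed) isClosed_singleton
  have hcp : IsCompact ((Icc (0:ℝ) 1 ×ˢ K) ∩ (fun z : ℝ × E => Φ z.1 z.2) ⁻¹' {0}) :=
    (isCompact_Icc.prod hK).of_isClosed_subset hcl inter_subset_left
  have hZ := (hcp.image continuous_snd).isClosed
  obtain ⟨μ, hμ0, hμ1, hμI⟩ := exists_continuous_zero_one_of_isClosed
    (isClosed_frontier (s := K)) hZ (by
      rw [Set.disjoint_left]
      rintro x hx ⟨⟨t, y⟩, ⟨⟨ht, hy⟩, hz⟩, rfl⟩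
      exact hb t ht _ hx hz)
  have hΨc : ContinuousOn (fun x => Φ (μ x) x) K :=
    hΦ.comp (f := fun x => (μ x, x)) (μ.continuous.prodMk continuous_id).continuousOn
        (fun x hx => ⟨hμI x, hx⟩)
  have hΨ0 : ∀ x ∈ K, Φ (μ x) x ≠ 0 := by
    intro x hx h
    have h1 : μ x = 1 := hμ1 ⟨(μ x, x), ⟨⟨hμI x, hx⟩, h⟩, rfl⟩
    rw [h1] at h
    exact hno x hx h
  refine no_fill K hK (fun x => J (Rt (Φ' x))) (fun x => J (Rt (Φ (μ x) x)))
    (hJR.comp_continuousOn hΦ'c) (hJR.comp_continuousOn hΨc) ?_ ?_ ?_ ?_ ?_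
  · intro x hx
    have : μ x = 0 := hμ0 hx
    simp only [hfr x hx, this]
  · intro x hx h
    exact hΨ0 x hx (hJR0 _ h)
  · exact mem_of_superset (closedBall_mem_nhds _ hr) hrK
  · have hc1 : ContinuousAt (Θ 1) 0 := by
      have : ContinuousOn (Θ 1) (closedBall 0 r) :=
        hΘ.comp (f := fun x => ((1:ℝ), x)) (continuous_const.prodMk continuous_id).continuousOn
          (fun x hx => ⟨⟨zero_le_one, le_rfl⟩, hx⟩)
      exact this.continuousAt (closedBall_mem_nhds _ hr)
    have hc2 : ∀ᶠ x in 𝓝 (0:E), Θ 1 x ∈ closedBall (0:E') η :=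
      hc1.eventually (by rw [hΘ1]; exact closedBall_mem_nhds _ hη)
    filter_upwards [hJΘ, hc2, closedBall_mem_nhds (0:E) (half_pos hr)] with x h1 h2 h3
    have h4 : ‖x‖ ≤ r / 2 := mem_closedBall_zero_iff.1 h3
    have h5 : x ∈ closedBall (0:E) r := mem_closedBall_zero_iff.2 (by linarith)
    rw [hΦ'in x h5, hl1 x h4, hRid _ h2, h1]
  · intro x hx h
    exact hΦ'z x hx (hJR0 _ h)

end HomotopyZero
section Dyn
open Filter Topology

/-- Expansivity in terms of natural iterates. -/
def ExpN (f : M ≃ₜ M) (α : ℝ) : Prop :=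
  ∀ x y : M, (∀ k : ℕ, dist (f^[k] x) (f^[k] y) ≤ α) →
    (∀ k : ℕ, dist (f.symm^[k] x) (f.symm^[k] y) ≤ α) → x = y

/-- One-sided local stable relation. -/
def SL (f : M ≃ₜ M) (ε : ℝ) (x z : M) : Prop := ∀ k : ℕ, dist (f^[k] x) (f^[k] z) ≤ ε

theorem iterZ_nat (f : M ≃ₜ M) (k : ℕ) (x : M) : iterZ f (k : ℤ) x = f^[k] x := by
  simp only [iterZ, zpow_natCast, ← Equiv.Perm.iterate_eq_pow]; rfl

theorem iterZ_symm (f : M ≃ₜ M) (k : ℤ) (x : M) : iterZ f.symm k x = iterZ f (-k) x := by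
  have : f.symm.toEquiv = (f.toEquiv)⁻¹ := rfl
  simp only [iterZ, this, inv_zpow', zpow_neg]

theorem iterZ_neg (f : M ≃ₜ M) (k : ℕ) (x : M) : iterZ f (-(k : ℤ)) x = f.symm^[k] x := by
  rw [← iterZ_symm, iterZ_nat]

theorem ExpN.of (f : M ≃ₜ M) (α : ℝ) (h : IsExpansive f α) : ExpN f α := by
  intro x y h1 h2
  by_contra hne
  obtain ⟨k, hk⟩ := h x y hne
  obtain ⟨n, rfl | rfl⟩ := k.eq_nat_or_neg
  · rw [iterZ_nat, iterZ_nat] at hk; exact absurd (h1 n) (not_le.2 hk)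
  · rw [iterZ_neg, iterZ_neg] at hk; exact absurd (h2 n) (not_le.2 hk)

theorem ExpN.symm {f : M ≃ₜ M} {α : ℝ} (h : ExpN f α) : ExpN f.symm α :=
  fun x y h1 h2 => h x y h2 h1

theorem Wu_eq (f : M ≃ₜ M) (x : M) : Wu f x = Ws f.symm x := by
  ext y
  simp only [Wu, Ws, mem_ofPred_eq, iterZ_symm]
  constructor
  · intro h; exact h.comp tendsto_neg_atTop_atBot
  · intro h
    have := h.comp tendsto_neg_atBot_atTop
    simpa [Function.comp_def] using this

theorem mem_Ws (f : M ≃ₜ M) (x y : M)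
    (h : ∀ η > 0, ∃ J : ℕ, ∀ j ≥ J, dist (f^[j] x) (f^[j] y) < η) : y ∈ Ws f x := by
  simp only [Ws, mem_ofPred_eq]
  rw [Metric.tendsto_atTop]
  intro η hη
  obtain ⟨J, hJ⟩ := h η hη
  refine ⟨J, fun k hk => ?_⟩
  lift k to ℕ using (by omega)
  rw [iterZ_nat, iterZ_nat, dist_zero_right, Real.norm_of_nonneg dist_nonneg]
  exact hJ k (by exact_mod_cast hk)

theorem SL_closed (f : M ≃ₜ M) (ε : ℝ) : IsClosed {w : M × M | SL f ε w.1 w.2} := by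
  simp only [SL, ofPred_forall]
  exact isClosed_iInter fun k => isClosed_le
    (((f.continuous.iterate k).comp continuous_fst).dist
      ((f.continuous.iterate k).comp continuous_snd)) continuous_const

theorem symm_iter_iter (f : M ≃ₜ M) (j k : ℕ) (h : j ≤ k) (x : M) :
    f.symm^[j] (f^[k] x) = f^[k - j] x := by
  obtain ⟨i, rfl⟩ := Nat.exists_eq_add_of_le h
  rw [Function.iterate_add_apply, Nat.add_sub_cancel_left]
  exact (Function.LeftInverse.iterate f.symm_apply_apply j) _

theorem iter_symm_iter (f : M ≃ₜ M) (j k : ℕ) (h : j ≤ k) (x : M) :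
    f^[k] (f.symm^[j] x) = f^[k - j] x := by
  obtain ⟨i, rfl⟩ := Nat.exists_eq_add_of_le h
  rw [Nat.add_sub_cancel_left, Nat.add_comm, Function.iterate_add_apply]
  congr 1
  exact (Function.RightInverse.iterate f.apply_symm_apply j) _

theorem SL_unif [CompactSpace M] {f : M ≃ₜ M} {α ε : ℝ} (hexp : ExpN f α) (hε : ε ≤ α)
    (η : ℝ) (hη : 0 < η) :
    ∃ N : ℕ, ∀ x z, SL f ε x z → ∀ k ≥ N, dist (f^[k] x) (f^[k] z) < η := by
  by_contra hcon
  push Not at hcon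
  let C : ℕ → Set (M × M) := fun N => {w | η ≤ dist w.1 w.2} ∩ {w | SL f ε w.1 w.2} ∩
    ⋂ j ∈ {j : ℕ | j ≤ N}, {w | dist (f.symm^[j] w.1) (f.symm^[j] w.2) ≤ ε}
  have hC : ∀ N, IsClosed (C N) := fun N =>
    ((isClosed_le continuous_const continuous_dist).inter (SL_closed f ε)).inter
      (isClosed_biInter fun j _ => isClosed_le
        (((f.symm.continuous.iterate j).comp continuous_fst).dist
          ((f.symm.continuous.iterate j).comp continuous_snd)) continuous_const)
  have hne : (⋂ N, C N).Nonempty := by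
    refine IsCompact.nonempty_iInter_of_sequence_nonempty_isCompact_isClosed C ?_ ?_
      (hC 0).isCompact hC
    · intro N w hw
      refine ⟨hw.1, ?_⟩
      have h2 := hw.2
      simp only [mem_iInter, mem_ofPred_eq] at h2 ⊢
      exact fun j hj => h2 j (by omega)
    · intro N
      obtain ⟨x, z, hs, k, hk, hd⟩ := hcon N
      refine ⟨(f^[k] x, f^[k] z), ⟨hd, ?_⟩, ?_⟩
      · intro j
        simp only [← Function.iterate_add_apply]
        exact hs _
      · simp only [mem_iInter, mem_ofPred_eq]
        intro j hj
        rw [symm_iter_iter f j k (by omega), symm_iter_iter f j k (by omega)]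
        exact hs _
  obtain ⟨⟨x, y⟩, hw⟩ := hne
  rw [mem_iInter] at hw
  have hxy : x = y := by
    refine hexp x y (fun k => ((hw 0).1.2 k).trans hε) (fun k => ?_)
    have h2 := (hw k).2
    simp only [mem_iInter, mem_ofPred_eq] at h2
    exact (h2 k le_rfl).trans hε
  have h3 : η ≤ dist x y := (hw 0).1.1
  rw [hxy, dist_self] at h3
  linarith

theorem iter_unif [CompactSpace M] (f : M ≃ₜ M) (N : ℕ) (η : ℝ) (hη : 0 < η) :
    ∃ c > 0, ∀ x y : M, dist x y < c → ∀ k < N, dist (f^[k] x) (f^[k] y) < η := by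
  have h1 : ∀ᶠ w in uniformity M, ∀ k ∈ {k | k < N}, dist (f^[k] w.1) (f^[k] w.2) < η := by
    rw [Filter.eventually_all_finite (finite_lt_nat N)]
    intro k _
    exact (CompactSpace.uniformContinuous_of_continuous (f.continuous.iterate k))
      (Metric.dist_mem_uniformity hη)
  obtain ⟨c, hc, h2⟩ := Metric.mem_uniformity_dist.1 h1
  exact ⟨c, hc, fun x y hxy k hk => h2 hxy k hk⟩

theorem SL_sep [CompactSpace M] {f : M ≃ₜ M} {α ε : ℝ} (hexp : ExpN f α) (hε : ε ≤ α)
    (hε0 : 0 < ε) :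
    ∃ c > 0, ∀ x z, SL f ε x z → ∀ k, dist (f^[k] x) (f^[k] z) = ε → c ≤ dist x z := by
  obtain ⟨N, hN⟩ := SL_unif hexp hε ε hε0
  obtain ⟨c, hc, h⟩ := iter_unif f N ε hε0
  refine ⟨c, hc, fun x z hs k hk => ?_⟩
  by_contra hlt
  push Not at hlt
  rcases lt_or_ge k N with h1 | h1
  · exact absurd hk (h x z hlt k h1).ne
  · exact absurd hk (hN x z hs k h1).ne

theorem proj_closed [CompactSpace M] (C : Set (M × M)) (hC : IsClosed C) (p : M)
    (h : ∀ z, (p, z) ∉ C) : ∀ᶠ q in 𝓝 p, ∀ z, (q, z) ∉ C := by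
  have h1 : IsClosed (Prod.fst '' C) := isClosedMap_fst_of_compactSpace C hC
  have h2 : p ∈ (Prod.fst '' C)ᶜ := by
    rintro ⟨⟨a, b⟩, hw, rfl⟩; exact h b hw
  filter_upwards [h1.isOpen_compl.mem_nhds h2] with q hq z hz
  exact hq ⟨(q, z), hz, rfl⟩

variable {X Y : Type*} [NormedAddCommGroup X] [NormedSpace ℝ X]
  [NormedAddCommGroup Y] [NormedSpace ℝ Y]

/-- A hyperbolic chart at a periodic point, on a box of radius `ρ`. -/
structure HC (f : M ≃ₜ M) (l : ℕ) (p : M) (e : OpenPartialHomeomorph M (X × Y)) (ρ : ℝ) :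
    Prop where
  hl : 1 ≤ l
  fix : f^[l] p = p
  hρ : 0 < ρ
  ps : p ∈ e.source
  p0 : e p = 0
  box : ∀ v, ‖v‖ ≤ ρ → v ∈ e.target
  fwds : ∀ v, ‖v‖ ≤ ρ → f^[l] (e.symm v) ∈ e.source
  fwd : ∀ v, ‖v‖ ≤ ρ → e (f^[l] (e.symm v)) = ((1/2:ℝ) • v.1, (2:ℝ) • v.2)
  bwds : ∀ v, ‖v‖ ≤ ρ → f.symm^[l] (e.symm v) ∈ e.source
  bwd : ∀ v, ‖v‖ ≤ ρ → e (f.symm^[l] (e.symm v)) = ((2:ℝ) • v.1, (1/2:ℝ) • v.2)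

/-- The chart with swapped coordinates. -/
def swapE (e : OpenPartialHomeomorph M (X × Y)) : OpenPartialHomeomorph M (Y × X) :=
  e.transHomeomorph (Homeomorph.prodComm X Y)

theorem swapE_apply (e : OpenPartialHomeomorph M (X × Y)) (z : M) :
    swapE e z = ((e z).2, (e z).1) := rfl

theorem swapE_symm_apply (e : OpenPartialHomeomorph M (X × Y)) (v : Y × X) :
    (swapE e).symm v = e.symm (v.2, v.1) := rfl

theorem swapE_source (e : OpenPartialHomeomorph M (X × Y)) : (swapE e).source = e.source := rfl

theorem norm_swap (v : Y × X) : ‖((v.2, v.1) : X × Y)‖ = ‖v‖ := by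
  rw [Prod.norm_def, Prod.norm_def, max_comm]

theorem HC.swap {f : M ≃ₜ M} {l : ℕ} {p : M} {e : OpenPartialHomeomorph M (X × Y)} {ρ : ℝ}
    (h : HC f l p e ρ) : HC f.symm l p (swapE e) ρ where
  hl := h.hl
  fix := by
    conv_lhs => rw [← h.fix]
    rw [symm_iter_iter f l l le_rfl]; simp
  hρ := h.hρ
  ps := h.ps
  p0 := by rw [swapE_apply, h.p0]; rfl
  box := fun v hv => h.box (v.2, v.1) (by rwa [norm_swap])
  fwds := fun v hv => h.bwds (v.2, v.1) (by rwa [norm_swap])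
  fwd := fun v hv => by
    rw [swapE_apply, swapE_symm_apply, h.bwd _ (by rwa [norm_swap])]
  bwds := fun v hv => h.fwds (v.2, v.1) (by rwa [norm_swap])
  bwd := fun v hv => by
    have := h.fwd (v.2, v.1) (by rwa [norm_swap])
    rw [swapE_apply, swapE_symm_apply]
    exact Prod.ext (congrArg Prod.snd this) (congrArg Prod.fst this)

namespace HC
variable {f : M ≃ₜ M} {l : ℕ} {p : M} {e : OpenPartialHomeomorph M (X × Y)} {ρ : ℝ}

theorem symm_zero (h : HC f l p e ρ) : e.symm 0 = p := by
  rw [← h.p0, e.left_inv h.ps]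

theorem fixm (h : HC f l p e ρ) (m : ℕ) : f^[l * m] p = p := by
  rw [Function.iterate_mul]
  exact Function.iterate_fixed h.fix m

theorem norm_pair (a : X) : ‖((a, 0) : X × Y)‖ = ‖a‖ := by
  rw [Prod.norm_def]; simp

theorem fwd_one (h : HC f l p e ρ) (a : X) (ha : ‖a‖ ≤ ρ) :
    f^[l] (e.symm (a, 0)) = e.symm ((1/2:ℝ) • a, 0) := by
  have hn : ‖((a, 0) : X × Y)‖ ≤ ρ := by rwa [norm_pair]
  rw [← e.left_inv (h.fwds _ hn), h.fwd _ hn]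
  simp

theorem fwd_iter (h : HC f l p e ρ) (a : X) (ha : ‖a‖ ≤ ρ) (m : ℕ) :
    f^[l * m] (e.symm (a, 0)) = e.symm ((1/2:ℝ)^m • a, 0) := by
  induction m with
  | zero => simp
  | succ m ih =>
    have h1 : ‖(1/2:ℝ)^m • a‖ ≤ ρ := by
      rw [norm_smul, norm_pow, Real.norm_of_nonneg (by norm_num)]
      refine le_trans ?_ ha
      exact mul_le_of_le_one_left (norm_nonneg _) (pow_le_one₀ (by norm_num) (by norm_num))
    rw [Nat.mul_succ, Nat.add_comm, Function.iterate_add_apply, ih, h.fwd_one _ h1, smul_smul,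
      pow_succ']

theorem disc_unif [CompactSpace M] (h : HC f l p e ρ) (η : ℝ) (hη : 0 < η) :
    ∃ J : ℕ, ∀ j ≥ J, ∀ a : X, ‖a‖ ≤ ρ → dist (f^[j] p) (f^[j] (e.symm (a, 0))) < η := by
  obtain ⟨c, hc, hc'⟩ := iter_unif f l η hη
  have h0 : (0 : X × Y) ∈ e.target := h.box 0 (by simpa using h.hρ.le)
  have hcont : ContinuousAt e.symm (0 : X × Y) := e.continuousAt_symm h0
  obtain ⟨κ, hκ, hκ'⟩ := Metric.continuousAt_iff.1 hcont c hc
  obtain ⟨m₀, hm₀⟩ : ∃ m : ℕ, (1/2:ℝ)^m * ρ < κ := by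
    obtain ⟨m, hm⟩ := exists_pow_lt_of_lt_one (div_pos hκ h.hρ) (by norm_num : (1/2:ℝ) < 1)
    exact ⟨m, by rwa [lt_div_iff₀ h.hρ] at hm⟩
  refine ⟨l * m₀, fun j hj a ha => ?_⟩
  have hlpos : 0 < l := h.hl
  have hm : m₀ ≤ j / l := by
    rw [Nat.le_div_iff_mul_le hlpos, mul_comm]; exact hj
  have hj' : j % l + l * (j / l) = j := Nat.mod_add_div j l
  rw [← hj', Function.iterate_add_apply, Function.iterate_add_apply, h.fixm, h.fwd_iter a ha]
  refine hc' _ _ ?_ _ (Nat.mod_lt _ hlpos)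
  rw [dist_comm, ← h.symm_zero]
  refine hκ' ?_
  rw [dist_zero_right, norm_pair, norm_smul, norm_pow, Real.norm_of_nonneg (by norm_num)]
  calc (1/2:ℝ)^(j / l) * ‖a‖ ≤ (1/2:ℝ)^m₀ * ρ := by
        apply mul_le_mul _ ha (norm_nonneg _) (by positivity)
        exact pow_le_pow_of_le_one (by norm_num) (by norm_num) hm
    _ < κ := hm₀

theorem snd_zero (h : HC f l p e ρ) (z : M)
    (hz : ∀ m : ℕ, f^[l * m] z ∈ e.source ∧ ‖e (f^[l * m] z)‖ ≤ ρ) : (e z).2 = 0 := by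
  have h1 : ∀ m : ℕ, (e (f^[l * m] z)).2 = (2:ℝ)^m • (e z).2 := by
    intro m
    induction m with
    | zero => simp
    | succ m ih =>
      have h2 := h.fwd _ (hz m).2
      rw [e.left_inv (hz m).1] at h2
      rw [Nat.mul_succ, Nat.add_comm, Function.iterate_add_apply, h2, ih, smul_smul, pow_succ']
  by_contra hne
  have hpos : 0 < ‖(e z).2‖ := norm_pos_iff.2 hne
  obtain ⟨m, hm⟩ := pow_unbounded_of_one_lt (ρ / ‖(e z).2‖) (by norm_num : (1:ℝ) < 2)
  rw [div_lt_iff₀ hpos] at hm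
  have h3 : ‖(e (f^[l * m] z)).2‖ ≤ ρ := (norm_snd_le _).trans (hz m).2
  rw [h1, norm_smul, norm_pow, Real.norm_of_nonneg (by norm_num)] at h3
  linarith

theorem SL_snd_zero (h : HC f l p e ρ) {ε : ℝ} (hε0 : 0 < ε)
    (hg : ∀ z, dist z p ≤ 2 * ε → z ∈ e.source ∧ ‖e z‖ ≤ ρ) (z : M) (hz : SL f ε p z) :
    (e z).2 = 0 := by
  refine h.snd_zero z fun m => hg _ ?_
  have := hz (l * m)
  rw [h.fixm, dist_comm] at this
  linarith

theorem near_ball {ε : ℝ} (q z : M) (hq : dist q p ≤ ε) (hz : SL f ε q z) :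
    dist z p ≤ 2 * ε := by
  have h1 : dist q z ≤ ε := hz 0
  have := dist_triangle z q p
  rw [dist_comm z q] at this
  linarith

theorem near1 [CompactSpace M] (h : HC f l p e ρ) {ε : ℝ} (hε0 : 0 < ε)
    (hg : ∀ z, dist z p ≤ 2 * ε → z ∈ e.source ∧ ‖e z‖ ≤ ρ) (η : ℝ) (hη : 0 < η) :
    ∀ᶠ q in 𝓝 p, ∀ z, SL f ε q z → ‖(e z).2‖ < η := by
  have hce : ContinuousOn e (closedBall p (2 * ε)) := e.continuousOn.mono fun z hz => (hg z hz).1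
  have hcl : IsClosed (closedBall p (2 * ε) ∩ (fun z => ‖(e z).2‖) ⁻¹' (Ici η)) :=
    hce.snd.norm.preimage_isClosed_of_isClosed isClosed_closedBall isClosed_Ici
  have := proj_closed ({w : M × M | SL f ε w.1 w.2} ∩
    Prod.snd ⁻¹' (closedBall p (2 * ε) ∩ (fun z => ‖(e z).2‖) ⁻¹' (Ici η)))
    ((SL_closed f ε).inter (hcl.preimage continuous_snd)) p (by
      rintro z ⟨h1, h2, h3⟩
      have h4 : η ≤ ‖(e z).2‖ := h3
      rw [h.SL_snd_zero hε0 hg z h1, norm_zero] at h4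
      linarith)
  filter_upwards [this, closedBall_mem_nhds p hε0] with q hq hqb z hz
  by_contra hlt
  exact hq z ⟨hz, near_ball q z hqb hz, not_lt.1 hlt⟩

theorem near2 [CompactSpace M] (h : HC f l p e ρ) {α ε : ℝ} (hexp : ExpN f α) (hε : ε ≤ α)
    (hε0 : 0 < ε)
    (hg : ∀ z, dist z p ≤ 2 * ε → z ∈ e.source ∧ ‖e z‖ ≤ ρ) :
    ∃ c > 0, ∀ᶠ q in 𝓝 p, ∀ z, SL f ε q z → ∀ k, dist (f^[k] q) (f^[k] z) = ε →
      c ≤ ‖(e z).1‖ := by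
  obtain ⟨c₀, hc₀, hsep⟩ := SL_sep hexp hε hε0
  have hce : ContinuousOn e (closedBall p (2 * ε)) := e.continuousOn.mono fun z hz => (hg z hz).1
  have hFc : IsClosed ({z | SL f ε p z} ∩ {z | c₀ ≤ dist p z}) :=
    ((SL_closed f ε).preimage (continuous_const.prodMk continuous_id : Continuous fun z => (p, z))).inter
      (isClosed_le continuous_const (continuous_const.dist continuous_id))
  have hsub : ∀ z ∈ ({z | SL f ε p z} ∩ {z | c₀ ≤ dist p z}), z ∈ closedBall p (2 * ε) :=
    fun z hz => near_ball p z (by simpa using hε0.le) hz.1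
  obtain ⟨c, hc, hmin⟩ := hFc.isCompact.exists_forall_le' (f := fun z => ‖(e z).1‖) (a := 0)
    (hce.fst.norm.mono hsub) (by
      rintro z hz
      rw [norm_pos_iff]
      intro h0
      have h1 := h.SL_snd_zero hε0 hg z hz.1
      have h2 : e z = e p := by rw [h.p0]; exact Prod.ext h0 h1
      have h3 : z = p := e.injOn (hg z (hsub z hz)).1 h.ps h2
      have h4 : c₀ ≤ dist p z := hz.2
      rw [h3, dist_self] at h4
      linarith)
  have hcl : IsClosed (closedBall p (2 * ε) ∩ (fun z => ‖(e z).1‖) ⁻¹' (Iic (c/2))) :=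
    hce.fst.norm.preimage_isClosed_of_isClosed isClosed_closedBall isClosed_Iic
  have := proj_closed (({w : M × M | SL f ε w.1 w.2} ∩ {w : M × M | c₀ ≤ dist w.1 w.2}) ∩
    Prod.snd ⁻¹' (closedBall p (2 * ε) ∩ (fun z => ‖(e z).1‖) ⁻¹' (Iic (c/2))))
    (((SL_closed f ε).inter (isClosed_le continuous_const continuous_dist)).inter
      (hcl.preimage continuous_snd)) p (by
      rintro z ⟨h1, h2, h3⟩
      have h4 : ‖(e z).1‖ ≤ c/2 := h3
      have := hmin z h1
      linarith)
  refine ⟨c/2, by linarith, ?_⟩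
  filter_upwards [this, closedBall_mem_nhds p hε0] with q hq hqb z hz k hk
  by_contra hlt
  exact hq z ⟨⟨hz, hsep q z hz k hk⟩, near_ball q z hqb hz, (not_le.1 hlt).le⟩

end HC
end Dyn
section Asm
open Filter Topology

variable {X Y : Type*} [NormedAddCommGroup X] [NormedSpace ℝ X]
  [NormedAddCommGroup Y] [NormedSpace ℝ Y]

/-- The parametrization of a large stable disc. -/
def psi (f : M ≃ₜ M) (l N : ℕ) (e : OpenPartialHomeomorph M (X × Y)) (a : X) : M :=
  f.symm^[l * N] (e.symm (a, 0))

namespace HC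
variable {f : M ≃ₜ M} {l : ℕ} {p : M} {e : OpenPartialHomeomorph M (X × Y)} {ρ : ℝ}

theorem psi_iter (f : M ≃ₜ M) (l N : ℕ) (e : OpenPartialHomeomorph M (X × Y)) (a : X) :
    f^[l * N] (psi f l N e a) = e.symm (a, 0) := by
  rw [psi, iter_symm_iter f _ _ le_rfl]; simp

theorem psi_zero (h : HC f l p e ρ) (N : ℕ) : psi f l N e 0 = p := by
  have h1 : e.symm ((0 : X), (0 : Y)) = p := h.symm_zero
  rw [psi, h1]
  exact h.swap.fixm N

theorem psi_cont (h : HC f l p e ρ) (N : ℕ) : ContinuousOn (psi f l N e) (closedBall 0 ρ) := by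
  refine (f.symm.continuous.iterate (l * N)).comp_continuousOn ?_
  refine e.continuousOn_symm.comp (Continuous.continuousOn (by fun_prop)) ?_
  intro a ha
  exact h.box _ (by rw [norm_pair]; simpa using ha)

theorem psi_small (h : HC f l p e ρ) (N : ℕ) (a : X) (ha : ‖(2:ℝ)^N • a‖ ≤ ρ) :
    psi f l N e a = e.symm ((2:ℝ)^N • a, 0) := by
  have h1 := h.fwd_iter _ ha N
  rw [smul_smul, ← mul_pow] at h1
  norm_num at h1
  rw [psi, ← h1, symm_iter_iter f _ _ le_rfl]; simp

theorem psi_tail [CompactSpace M] (h : HC f l p e ρ) (N : ℕ) (η : ℝ) (hη : 0 < η) :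
    ∃ J : ℕ, ∀ j ≥ J, ∀ a : X, ‖a‖ ≤ ρ → dist (f^[j] p) (f^[j] (psi f l N e a)) < η := by
  obtain ⟨J, hJ⟩ := h.disc_unif η hη
  refine ⟨l * N + J, fun j hj a ha => ?_⟩
  have h1 := hJ (j - l * N) (by omega) a ha
  have h2 : j = (j - l * N) + l * N := by omega
  rw [h2, Function.iterate_add_apply, Function.iterate_add_apply, psi_iter, h.fixm]
  exact h1

theorem psi_comp [CompactSpace M] (h : HC f l p e ρ) (N : ℕ) (a : X) (ha : ‖a‖ ≤ ρ) :
    psi f l N e a ∈ connectedComponentIn (Ws f p ∩ univ) p := by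
  have hc : IsPreconnected (psi f l N e '' closedBall 0 ρ) :=
    (convex_closedBall (0:X) ρ).isPreconnected.image _ (h.psi_cont N)
  refine hc.subset_connectedComponentIn ⟨0, by simpa using h.hρ.le, h.psi_zero N⟩ ?_
    ⟨a, by simpa using ha, rfl⟩
  rintro _ ⟨b, hb, rfl⟩
  refine ⟨mem_Ws f _ _ fun η hη => ?_, mem_univ _⟩
  obtain ⟨J, hJ⟩ := h.psi_tail N η hη
  exact ⟨J, fun j hj => hJ j hj b (by simpa using hb)⟩

theorem disc_comp [CompactSpace M] (h : HC f l p e ρ) (a : X) (ha : ‖a‖ ≤ ρ) :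
    e.symm (a, 0) ∈ connectedComponentIn (Ws f p ∩ univ) p := by
  have := h.psi_comp 0 a ha
  simpa [psi] using this

/-- The parameter domain. -/
def dom (f : M ≃ₜ M) (l N : ℕ) (e : OpenPartialHomeomorph M (X × Y)) (ρ ε : ℝ) (q : M) : Set X :=
  {a | ‖a‖ ≤ ρ ∧ SL f ε q (psi f l N e a)}

theorem dom_compact [FiniteDimensional ℝ X] (h : HC f l p e ρ) (N : ℕ) (ε : ℝ) :
    IsCompact (dom f l N e ρ ε p) := by
  have : ProperSpace X := FiniteDimensional.proper_real X
  have h1 : IsClosed (closedBall (0:X) ρ ∩ (psi f l N e) ⁻¹' {z | SL f ε p z}) :=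
    (h.psi_cont N).preimage_isClosed_of_isClosed isClosed_closedBall
      ((SL_closed f ε).preimage
        (continuous_const.prodMk continuous_id : Continuous fun z => (p, z)))
  have h2 : dom f l N e ρ ε p = closedBall (0:X) ρ ∩ (psi f l N e) ⁻¹' {z | SL f ε p z} := by
    ext a; simp [dom]
  rw [h2]
  exact (isCompact_closedBall (0:X) ρ).of_isClosed_subset h1 inter_subset_left

theorem dom_nhds [CompactSpace M] (h : HC f l p e ρ) (N : ℕ) {ε : ℝ} (hε0 : 0 < ε) (a : X)
    (ha : ‖a‖ < ρ) (hk : ∀ k, dist (f^[k] p) (f^[k] (psi f l N e a)) < ε) :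
    dom f l N e ρ ε p ∈ 𝓝 a := by
  obtain ⟨J, hJ⟩ := h.psi_tail N ε hε0
  have hca : ContinuousAt (psi f l N e) a :=
    (h.psi_cont N).continuousAt (closedBall_mem_nhds_of_mem (by simpa using ha))
  have h1 : ∀ᶠ b in 𝓝 a, ∀ k ∈ {k | k < J}, dist (f^[k] p) (f^[k] (psi f l N e b)) < ε := by
    rw [Filter.eventually_all_finite (finite_lt_nat J)]
    intro k _
    have : ContinuousAt (fun b => dist (f^[k] p) (f^[k] (psi f l N e b))) a :=
      continuousAt_const.dist ((f.continuous.iterate k).continuousAt.comp hca)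
    exact this.eventually (gt_mem_nhds (hk k))
  have h2 : ∀ᶠ b in 𝓝 a, ‖b‖ < ρ := continuous_norm.continuousAt.eventually (gt_mem_nhds ha)
  filter_upwards [h1, h2] with b hb1 hb2
  refine ⟨hb2.le, fun k => ?_⟩
  rcases lt_or_ge k J with h3 | h3
  · exact (hb1 k h3).le
  · exact (hJ k h3 b hb2.le).le

theorem dom_small [CompactSpace M] (h : HC f l p e ρ) {α ε : ℝ} (hexp : ExpN f α) (hε : ε ≤ α) :
    ∃ N0 : ℕ, ∀ N ≥ N0, ∀ a ∈ dom f l N e ρ ε p, ‖a‖ < ρ := by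
  have h1 : ∀ᶠ z in 𝓝 p, ‖e z‖ < ρ := by
    have := (e.continuousAt h.ps).norm.eventually (gt_mem_nhds (by beta_reduce; rw [h.p0, norm_zero]; exact h.hρ))
    exact this
  obtain ⟨η, hη, hη'⟩ := Metric.eventually_nhds_iff.1 h1
  obtain ⟨N0, hN0⟩ := SL_unif hexp hε η hη
  refine ⟨N0, fun N hN a ha => ?_⟩
  have h2 := hN0 _ _ ha.2 (l * N) (by nlinarith [h.hl])
  rw [psi_iter, h.fixm, dist_comm] at h2
  have h3 := hη' h2
  rw [e.right_inv (h.box _ (by rw [norm_pair]; exact ha.1)), norm_pair] at h3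
  exact h3

theorem dom_frontier [CompactSpace M] [FiniteDimensional ℝ X] (h : HC f l p e ρ) (N : ℕ) {ε : ℝ}
    (hε0 : 0 < ε)
    (hs : ∀ a ∈ dom f l N e ρ ε p, ‖a‖ < ρ) (a : X) (ha : a ∈ frontier (dom f l N e ρ ε p)) :
    ∃ k, dist (f^[k] p) (f^[k] (psi f l N e a)) = ε := by
  have h1 : a ∈ dom f l N e ρ ε p := (h.dom_compact N ε).isClosed.frontier_subset ha
  by_contra hcon
  push Not at hcon
  have h2 := h.dom_nhds N hε0 a (hs a h1) fun k => lt_of_le_of_ne (h1.2 k) (hcon k)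
  exact ha.2 (mem_interior_iff_mem_nhds.2 h2)

theorem dom_zero [CompactSpace M] (h : HC f l p e ρ) (N : ℕ) {ε : ℝ} (hε0 : 0 < ε) :
    dom f l N e ρ ε p ∈ 𝓝 (0:X) :=
  h.dom_nhds N hε0 0 (by simpa using h.hρ) fun k => by rw [h.psi_zero, dist_self]; exact hε0

theorem psi_inj (h : HC f l p e ρ) (N : ℕ) (a : X) (ha : ‖a‖ ≤ ρ) (hp : psi f l N e a = p) :
    a = 0 := by
  have h1 := psi_iter f l N e a
  rw [hp, h.fixm] at h1
  have h2 := e.right_inv (h.box (a, 0) (by rw [norm_pair]; exact ha))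
  rw [← h1, h.p0] at h2
  exact (congrArg Prod.fst h2).symm

end HC
end Asm
section Core
open Filter Topology

variable {X Y : Type*} [NormedAddCommGroup X] [NormedSpace ℝ X]
  [NormedAddCommGroup Y] [NormedSpace ℝ Y]
variable {X' Y' : Type*} [NormedAddCommGroup X'] [NormedSpace ℝ X']
  [NormedAddCommGroup Y'] [NormedSpace ℝ Y']
variable {F : Type*} [NormedAddCommGroup F] [NormedSpace ℝ F]

/-- The local homotopy. -/
def Tht (e : OpenPartialHomeomorph M F) (e' : OpenPartialHomeomorph M (X' × Y')) (s : ℝ)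
    (t : ℝ) (x : X' × Y') : F :=
  e (e'.symm (s • x.1, -(t • s • x.2))) - e (e'.symm (0, (1 - t) • s • x.2))

theorem tht_bounds (s t r : ℝ) (hs : 0 < s) (ht : t ∈ Icc (0:ℝ) 1) (x : X' × Y') (hx : ‖x‖ ≤ r) :
    ‖((s • x.1, -(t • s • x.2)) : X' × Y')‖ ≤ s * r ∧
    ‖((0, (1 - t) • s • x.2) : X' × Y')‖ ≤ s * r := by
  have h1 : ‖x.1‖ ≤ r := (norm_fst_le x).trans hx
  have h2 : ‖x.2‖ ≤ r := (norm_snd_le x).trans hx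
  have hr : 0 ≤ r := (norm_nonneg _).trans hx
  have h3 : s * ‖x.2‖ ≤ s * r := by gcongr
  have h4 : s * ‖x.1‖ ≤ s * r := by gcongr
  have h5 : 0 ≤ s * ‖x.2‖ := by positivity
  constructor
  · rw [Prod.norm_def, norm_neg, norm_smul, norm_smul, norm_smul, Real.norm_of_nonneg hs.le,
      Real.norm_of_nonneg ht.1]
    exact max_le h4 (by nlinarith [ht.2])
  · rw [Prod.norm_def, norm_zero, norm_smul, norm_smul, Real.norm_of_nonneg hs.le,
      Real.norm_of_nonneg (by linarith [ht.2])]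
    exact max_le (by positivity) (by nlinarith [ht.1])

theorem tht_local (e : OpenPartialHomeomorph M F) (e' : OpenPartialHomeomorph M (X' × Y')) (s : ℝ)
    (hs : 0 < s) (δ : ℝ)
    (hδ : ∀ w : X' × Y', ‖w‖ ≤ δ → w ∈ e'.target ∧ e'.symm w ∈ e.source) (r : ℝ)
    (hr : s * r ≤ δ) :
    ContinuousOn (fun z : ℝ × (X' × Y') => Tht e e' s z.1 z.2) (Icc 0 1 ×ˢ closedBall 0 r) ∧
    ∀ t ∈ Icc (0:ℝ) 1, ∀ x ∈ closedBall (0 : X' × Y') r, Tht e e' s t x = 0 → x = 0 := by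
  have hE : ContinuousOn (fun w => e (e'.symm w)) (closedBall (0 : X' × Y') δ) := by
    refine e.continuousOn.comp (e'.continuousOn_symm.mono fun w hw => ?_) fun w hw => ?_
    · exact (hδ w (by simpa using hw)).1
    · exact (hδ w (by simpa using hw)).2
  constructor
  · refine ContinuousOn.sub ?_ ?_
    · refine hE.comp (f := fun z : ℝ × (X' × Y') => (s • z.2.1, -(z.1 • s • z.2.2)))
        (Continuous.continuousOn (by fun_prop)) ?_
      rintro ⟨t, x⟩ ⟨ht, hx⟩
      have := (tht_bounds s t r hs ht x (by simpa using hx)).1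
      simpa using this.trans hr
    · refine hE.comp (f := fun z : ℝ × (X' × Y') => ((0 : X'), (1 - z.1) • s • z.2.2))
        (Continuous.continuousOn (by fun_prop)) ?_
      rintro ⟨t, x⟩ ⟨ht, hx⟩
      have := (tht_bounds s t r hs ht x (by simpa using hx)).2
      rw [mem_closedBall_zero_iff]
      exact this.trans hr
  · intro t ht x hx h0
    obtain ⟨b1, b2⟩ := tht_bounds s t r hs ht x (by simpa using hx)
    have d1 := hδ _ (b1.trans hr)
    have d2 := hδ _ (b2.trans hr)
    have h1 := e.injOn d1.2 d2.2 (sub_eq_zero.1 h0)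
    have h2 := e'.symm.injOn d1.1 d2.1 h1
    have h3 : s • x.1 = 0 := congrArg Prod.fst h2
    have h4 : -(t • s • x.2) = (1 - t) • s • x.2 := congrArg Prod.snd h2
    have h5 : s • x.2 = 0 := by
      rw [sub_smul, one_smul] at h4
      have h6 : s • x.2 - t • s • x.2 + t • s • x.2 = 0 := by rw [← h4]; simp
      simpa using h6
    exact Prod.ext ((smul_eq_zero.1 h3).resolve_left hs.ne')
      ((smul_eq_zero.1 h5).resolve_left hs.ne')

theorem tht_inv (e : OpenPartialHomeomorph M F) (e' : OpenPartialHomeomorph M (X' × Y')) (s : ℝ)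
    (hs : 0 < s) (q : M) (hq : q ∈ e.source) (hq' : q ∈ e'.source) (hq0 : e' q = 0) :
    ∃ (J : F → X' × Y') (η : ℝ), 0 < η ∧ ContinuousOn J (closedBall 0 η) ∧
      (∀ v ∈ closedBall (0:F) η, J v = 0 → v = 0) ∧
      ∀ᶠ x in 𝓝 (0 : X' × Y'), J (Tht e e' s 1 x) = x := by
  have hsy : e'.symm 0 = q := by rw [← hq0, e'.left_inv hq']
  have ht0 : (0 : X' × Y') ∈ e'.target := by rw [← hq0]; exact e'.map_source hq'
  have heq : e q ∈ e.target := e.map_source hq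
  have c1 : ∀ᶠ v in 𝓝 (0:F), v + e q ∈ e.target ∧ e.symm (v + e q) ∈ e'.source := by
    have c0 : ContinuousAt (fun v : F => v + e q) 0 := by fun_prop
    have a1 : ∀ᶠ v in 𝓝 (0:F), v + e q ∈ e.target :=
      c0.eventually (e.open_target.mem_nhds (by simpa using heq))
    have c2 : ContinuousAt (fun v : F => e.symm (v + e q)) 0 := by
      refine ContinuousAt.comp (g := e.symm) ?_ c0
      exact e.continuousAt_symm (by simpa using heq)
    have a2 : ∀ᶠ v in 𝓝 (0:F), e.symm (v + e q) ∈ e'.source :=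
      c2.eventually (e'.open_source.mem_nhds (by simpa [e.left_inv hq] using hq'))
    exact a1.and a2
  obtain ⟨η, hη, hη'⟩ := Metric.nhds_basis_closedBall.mem_iff.1 c1
  refine ⟨fun v => (s⁻¹ • (e' (e.symm (v + e q))).1, -(s⁻¹ • (e' (e.symm (v + e q))).2)), η, hη,
    ?_, ?_, ?_⟩
  · have hc : ContinuousOn (fun v => e' (e.symm (v + e q))) (closedBall (0:F) η) := by
      refine e'.continuousOn.comp (e.continuousOn_symm.comp
        (Continuous.continuousOn (by fun_prop)) fun v hv => (hη' hv).1) fun v hv => (hη' hv).2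
    exact (hc.fst.const_smul s⁻¹).prodMk (hc.snd.const_smul s⁻¹).neg
  · intro v hv h0
    have h1 : s⁻¹ • (e' (e.symm (v + e q))).1 = 0 := congrArg Prod.fst h0
    have h2 : -(s⁻¹ • (e' (e.symm (v + e q))).2) = 0 := congrArg Prod.snd h0
    have hsi : s⁻¹ ≠ 0 := inv_ne_zero hs.ne'
    have h3 : e' (e.symm (v + e q)) = e' q := by
      rw [hq0]
      exact Prod.ext ((smul_eq_zero.1 h1).resolve_left hsi)
        ((smul_eq_zero.1 (neg_eq_zero.1 h2)).resolve_left hsi)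
    have h4 := e'.injOn (hη' hv).2 hq' h3
    have h5 := congrArg e h4
    rw [e.right_inv (hη' hv).1] at h5
    simpa using h5
  · have c3 : ContinuousAt (fun x : X' × Y' => ((s • x.1, -((1:ℝ) • s • x.2)) : X' × Y')) 0 := by
      fun_prop
    have a1 : ∀ᶠ x in 𝓝 (0 : X' × Y'), ((s • x.1, -((1:ℝ) • s • x.2)) : X' × Y') ∈ e'.target :=
      c3.eventually (e'.open_target.mem_nhds (by
        simpa [Prod.mk_zero_zero] using ht0))
    have c4 : ContinuousAt (fun x : X' × Y' => e'.symm (s • x.1, -((1:ℝ) • s • x.2))) 0 := by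
      refine ContinuousAt.comp (g := e'.symm) ?_ c3
      exact e'.continuousAt_symm (by simpa [Prod.mk_zero_zero] using ht0)
    have a2 : ∀ᶠ x in 𝓝 (0 : X' × Y'), e'.symm (s • x.1, -((1:ℝ) • s • x.2)) ∈ e.source := by
      refine c4.eventually (e.open_source.mem_nhds ?_)
      have : ((s • (0 : X' × Y').1, -((1:ℝ) • s • (0 : X' × Y').2)) : X' × Y') = 0 := by simp
      beta_reduce
      rw [this, hsy]; exact hq
    filter_upwards [a1, a2] with x h1 h2
    have h3 : Tht e e' s 1 x + e q = e (e'.symm (s • x.1, -((1:ℝ) • s • x.2))) := by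
      have : ((0, (1 - (1:ℝ)) • s • x.2) : X' × Y') = 0 := by simp
      rw [Tht, this, hsy]; simp
    beta_reduce
    rw [h3, e.left_inv h2, e'.right_inv h1]
    simp [smul_smul, hs.ne']

theorem norm_shrink (t : ℝ) (ht : t ∈ Icc (0:ℝ) 1) (u : F) : ‖(1 - t) • u‖ ≤ ‖u‖ := by
  rw [norm_smul, Real.norm_of_nonneg (by linarith [ht.2])]
  exact mul_le_of_le_one_left (norm_nonneg _) (by linarith [ht.1])

theorem core [CompactSpace M] [FiniteDimensional ℝ X'] [FiniteDimensional ℝ Y']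
    {f : M ≃ₜ M} {m : ℕ} {p q : M} {e : OpenPartialHomeomorph M (X × Y)}
    {e' : OpenPartialHomeomorph M (X' × Y')} {ρ ρ' α ε cs cu : ℝ}
    (hq : HC f m q e' ρ') (hexp : ExpN f α) (hε : ε ≤ α) (hε0 : 0 < ε)
    (hg : ∀ z, dist z p ≤ 2 * ε → z ∈ e.source ∧ ‖e z‖ ≤ ρ) (hqb : dist q p ≤ ε)
    (hcs : ∀ z, SL f ε q z → ∀ k, dist (f^[k] q) (f^[k] z) = ε → cs ≤ ‖(e z).1‖)
    (hcu : ∀ z, SL f.symm ε q z → ∀ k, dist (f.symm^[k] q) (f.symm^[k] z) = ε → cu ≤ ‖(e z).2‖)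
    (hn1 : ∀ z, SL f ε q z → ‖(e z).2‖ < cu)
    (hn2 : ∀ z, SL f.symm ε q z → ‖(e z).1‖ < cs) :
    ∃ (N : ℕ) (a : X') (b : Y'), ‖a‖ ≤ ρ' ∧ ‖b‖ ≤ ρ' ∧
      SL f ε q (psi f m N e' a) ∧ SL f.symm ε q (psi f.symm m N (swapE e') b) ∧
      (e (psi f m N e' a)).1 = 0 ∧ (e (psi f.symm m N (swapE e') b)).2 = 0 := by
  obtain ⟨N1, hN1⟩ := hq.dom_small hexp hε
  obtain ⟨N2, hN2⟩ := hq.swap.dom_small hexp.symm hε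
  obtain ⟨N, hNa, hNb⟩ : ∃ N, N ≥ N1 ∧ N ≥ N2 := ⟨max N1 N2, le_max_left _ _, le_max_right _ _⟩
  specialize hN1 N hNa
  specialize hN2 N hNb
  refine ⟨N, ?_⟩
  set A := HC.dom f m N e' ρ' ε q with hA
  set B := HC.dom f.symm m N (swapE e') ρ' ε q with hB
  set ψs := psi f m N e' with hψs
  set ψu := psi f.symm m N (swapE e') with hψu
  have hAc : IsCompact A := hq.dom_compact N ε
  have hBc : IsCompact B := hq.swap.dom_compact N ε
  have srcA : ∀ a ∈ A, ψs a ∈ e.source := fun a ha => (hg _ (HC.near_ball q _ hqb ha.2)).1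
  have srcB : ∀ b ∈ B, ψu b ∈ e.source := fun b hb =>
    (hg _ (HC.near_ball (f := f.symm) q _ hqb hb.2)).1
  have cA : ContinuousOn (fun a => e (ψs a)) A :=
    e.continuousOn.comp ((hq.psi_cont N).mono fun a ha => by simpa using ha.1) srcA
  have cB : ContinuousOn (fun b => e (ψu b)) B :=
    e.continuousOn.comp ((hq.swap.psi_cont N).mono fun b hb => by simpa using hb.1) srcB
  let Φ : ℝ → X' × Y' → X × Y := fun t x =>
    ((e (ψs x.1)).1 - (1 - t) • (e (ψu x.2)).1, (1 - t) • (e (ψs x.1)).2 - (e (ψu x.2)).2)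
  have hs : (0:ℝ) < 2 ^ N := by positivity
  have hqs : q ∈ e.source := (hg q (by linarith)).1
  obtain ⟨δ, hδ, hδ'⟩ : ∃ δ > 0, ∀ w : X' × Y', ‖w‖ ≤ δ →
      (w ∈ e'.target ∧ e'.symm w ∈ e.source) ∧ ‖w‖ ≤ ρ' := by
    have ht0 : (0 : X' × Y') ∈ e'.target := hq.box 0 (by simpa using hq.hρ.le)
    have a1 : ∀ᶠ w in 𝓝 (0 : X' × Y'), e'.symm w ∈ e.source :=
      (e'.continuousAt_symm ht0).eventually (e.open_source.mem_nhds (by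
        rw [hq.symm_zero]; exact hqs))
    have a2 : ∀ᶠ w in 𝓝 (0 : X' × Y'), w ∈ e'.target := e'.open_target.mem_nhds ht0
    have a3 : ∀ᶠ w in 𝓝 (0 : X' × Y'), w ∈ closedBall (0 : X' × Y') ρ' :=
      closedBall_mem_nhds _ hq.hρ
    obtain ⟨δ, hδ, h1⟩ := Metric.nhds_basis_closedBall.mem_iff.1 ((a2.and a1).and a3)
    refine ⟨δ, hδ, fun w hw => ?_⟩
    have := h1 (show w ∈ closedBall 0 δ by simpa using hw)
    exact ⟨this.1, by simpa using this.2⟩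
  obtain ⟨r, hr, hrK, hrs⟩ : ∃ r > 0, closedBall (0 : X' × Y') r ⊆ A ×ˢ B ∧ 2 ^ N * r ≤ δ := by
    have : A ×ˢ B ∈ 𝓝 (0 : X' × Y') :=
      prod_mem_nhds (hq.dom_zero N hε0) (hq.swap.dom_zero N hε0)
    obtain ⟨r, hr, h1⟩ := Metric.nhds_basis_closedBall.mem_iff.1 this
    refine ⟨min r (δ / 2 ^ N), lt_min hr (by positivity),
      (closedBall_subset_closedBall (min_le_left _ _)).trans h1, ?_⟩
    calc 2 ^ N * min r (δ / 2 ^ N) ≤ 2 ^ N * (δ / 2 ^ N) := by gcongr; exact min_le_right _ _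
      _ = δ := by field_simp
  obtain ⟨hΘ, hΘz⟩ := tht_local e e' (2 ^ N) hs δ (fun w hw => (hδ' w hw).1) r hrs
  obtain ⟨J, η, hη, hJ, hJ0, hJΘ⟩ := tht_inv e e' (2 ^ N) hs q hqs hq.ps hq.p0
  have main : ∃ x ∈ A ×ˢ B, Φ 1 x = 0 := by
    refine homotopy_zero (A ×ˢ B) (hAc.prod hBc) Φ ?_ ?_ ?_ (Tht e e' (2 ^ N)) r hr hrK hΘ ?_ hΘz
      ?_ J η hη hJ hJ0 hJΘ
    · have k1 : ContinuousOn (fun z : ℝ × (X' × Y') => e (ψs z.2.1)) (Icc 0 1 ×ˢ A ×ˢ B) :=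
        cA.comp (f := fun z : ℝ × (X' × Y') => z.2.1)
          (Continuous.continuousOn (by fun_prop)) fun z hz => hz.2.1
      have k2 : ContinuousOn (fun z : ℝ × (X' × Y') => e (ψu z.2.2)) (Icc 0 1 ×ˢ A ×ˢ B) :=
        cB.comp (f := fun z : ℝ × (X' × Y') => z.2.2)
          (Continuous.continuousOn (by fun_prop)) fun z hz => hz.2.2
      have k3 : ContinuousOn (fun z : ℝ × (X' × Y') => 1 - z.1) (Icc 0 1 ×ˢ A ×ˢ B) :=
        Continuous.continuousOn (by fun_prop)
      exact (k1.fst.sub (k3.smul k2.fst)).prodMk ((k3.smul k1.snd).sub k2.snd)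
    · intro t ht x hx h0
      have z1 : (e (ψs x.1)).1 = (1 - t) • (e (ψu x.2)).1 := sub_eq_zero.1 (congrArg Prod.fst h0)
      have z2 : (1 - t) • (e (ψs x.1)).2 = (e (ψu x.2)).2 := sub_eq_zero.1 (congrArg Prod.snd h0)
      have hxK : x ∈ A ×ˢ B := (hAc.prod hBc).isClosed.frontier_subset hx
      rw [frontier_prod_eq, hAc.isClosed.closure_eq, hBc.isClosed.closure_eq] at hx
      rcases hx with hx | hx
      · obtain ⟨k, hk⟩ := hq.swap.dom_frontier N hε0 hN2 x.2 hx.2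
        have i1 := hcu _ hxK.2.2 k hk
        have i2 := hn1 _ hxK.1.2
        have i3 : ‖(e (ψu x.2)).2‖ ≤ ‖(e (ψs x.1)).2‖ := by rw [← z2]; exact norm_shrink t ht _
        linarith
      · obtain ⟨k, hk⟩ := hq.dom_frontier N hε0 hN1 x.1 hx.1
        have i1 := hcs _ hxK.1.2 k hk
        have i2 := hn2 _ hxK.2.2
        have i3 : ‖(e (ψs x.1)).1‖ ≤ ‖(e (ψu x.2)).1‖ := by rw [z1]; exact norm_shrink t ht _
        linarith
    · intro x hx h0
      have z1 : (e (ψs x.1)).1 = (1 - (0:ℝ)) • (e (ψu x.2)).1 :=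
        sub_eq_zero.1 (congrArg Prod.fst h0)
      have z2 : (1 - (0:ℝ)) • (e (ψs x.1)).2 = (e (ψu x.2)).2 :=
        sub_eq_zero.1 (congrArg Prod.snd h0)
      rw [sub_zero, one_smul] at z1 z2
      have h1 : ψs x.1 = ψu x.2 := e.injOn (srcA _ hx.1) (srcB _ hx.2) (Prod.ext z1 z2)
      have h2 : q = ψs x.1 := hexp _ _ (fun k => (hx.1.2 k).trans hε) fun k => by
        rw [h1]; exact (hx.2.2 k).trans hε
      exact Prod.ext (hq.psi_inj N x.1 hx.1.1 h2.symm)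
        (hq.swap.psi_inj N x.2 hx.2.1 (h1.symm.trans h2.symm))
    · intro x hx
      have hb1 : ‖(2:ℝ) ^ N • x.1‖ ≤ ρ' := by
        have b1 := (tht_bounds (2 ^ N) 0 r hs (by simp) x (by simpa using hx)).1
        exact (norm_fst_le _).trans (hδ' _ (b1.trans hrs)).2
      have hb2 : ‖(2:ℝ) ^ N • x.2‖ ≤ ρ' := by
        have b1 := (tht_bounds (2 ^ N) 0 r hs (by simp) x (by simpa using hx)).2
        have b2 := (norm_snd_le _).trans (hδ' _ (b1.trans hrs)).2
        simpa using b2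
      have g1 : ψs x.1 = e'.symm ((2:ℝ) ^ N • x.1, 0) := hq.psi_small N _ hb1
      have g2 : ψu x.2 = e'.symm (0, (2:ℝ) ^ N • x.2) := hq.swap.psi_small N _ hb2
      simp only [Tht, Φ, g1, g2, sub_zero, one_smul, zero_smul, neg_zero]
      rfl
    · simp [Tht]
  obtain ⟨x, hx, h0⟩ := main
  have z1 : (e (ψs x.1)).1 - (1 - (1:ℝ)) • (e (ψu x.2)).1 = 0 := congrArg Prod.fst h0
  have z2 : (1 - (1:ℝ)) • (e (ψs x.1)).2 - (e (ψu x.2)).2 = 0 := congrArg Prod.snd h0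
  exact ⟨x.1, x.2, hx.1.1, hx.2.1, hx.1.2, hx.2.2, by simpa using z1, by simpa using z2⟩

end Core
section Build
open Filter Topology

theorem exists_HC (f : M ≃ₜ M) (n r : ℕ) (p : M) (hp : p ∈ PerHr f n r) :
    ∃ (l : ℕ) (e : OpenPartialHomeomorph M ((Fin r → ℝ) × (Fin (n - r) → ℝ))) (ρ : ℝ),
      HC f l p e ρ := by
  classical
  obtain ⟨l, hl, hfix, U, V, h, hU, hV, hV0, hpU, hp0, hconj⟩ := hp
  have hpow : ∀ z, (f.toEquiv ^ l) z = f^[l] z := fun z => by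
    rw [← iterZ_nat, iterZ, zpow_natCast]
  let e : OpenPartialHomeomorph M ((Fin r → ℝ) × (Fin (n - r) → ℝ)) :=
    { toFun := fun z => if hz : z ∈ U then (h ⟨z, hz⟩ : ModelSp n r) else 0
      invFun := fun v => if hv : v ∈ V then (h.symm ⟨v, hv⟩ : M) else p
      source := U
      target := V
      map_source' := fun z hz => by simp [hz]
      map_target' := fun v hv => by simp [hv]
      left_inv' := fun z hz => by simp [hz]
      right_inv' := fun v hv => by simp [hv]
      open_source := hU
      open_target := hV
      continuousOn_toFun := by
        rw [continuousOn_iff_continuous_domRestrict]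
        have : U.domRestrict (fun z => if hz : z ∈ U then (h ⟨z, hz⟩ : ModelSp n r) else 0)
            = fun z => (h z : ModelSp n r) := by
          funext z; simp [Set.domRestrict]
        rw [this]
        exact continuous_subtype_val.comp h.continuous
      continuousOn_invFun := by
        rw [continuousOn_iff_continuous_domRestrict]
        have : V.domRestrict (fun v => if hv : v ∈ V then (h.symm ⟨v, hv⟩ : M) else p)
            = fun v => (h.symm v : M) := by
          funext z; simp [Set.domRestrict]
        rw [this]
        exact continuous_subtype_val.comp h.symm.continuous }
  have he : ∀ z (hz : z ∈ U), e z = (h ⟨z, hz⟩ : ModelSp n r) := fun z hz => by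
    change (if hz : z ∈ U then (h ⟨z, hz⟩ : ModelSp n r) else 0) = _
    simp [hz]
  have hes : e.source = U := rfl
  have het : e.target = V := rfl
  have hc : ∀ z ∈ U, f^[l] z ∈ U →
      e (f^[l] z) = ((1/2:ℝ) • (e z).1, (2:ℝ) • (e z).2) := by
    intro z hz hz'
    have hz'' : (f.toEquiv ^ l) z ∈ U := by rw [hpow]; exact hz'
    have h1 := hconj z hz hz''
    rw [← he, ← he, hpow] at h1
    rw [h1, modelL]
    ext i
    · simp; ring
    · simp
  have hep : e p = 0 := by rw [he p hpU, hp0]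
  have hsy : e.symm 0 = p := by rw [← hep]; exact e.left_inv hpU
  rw [hpow] at hfix
  have hfix' : f.symm^[l] p = p := by
    conv_lhs => rw [← hfix]
    rw [symm_iter_iter f l l le_rfl]; simp
  have hca : ContinuousAt e.symm (0 : (Fin r → ℝ) × (Fin (n - r) → ℝ)) := e.continuousAt_symm hV0
  have e1 : ∀ᶠ v in 𝓝 (0 : (Fin r → ℝ) × (Fin (n - r) → ℝ)), f^[l] (e.symm v) ∈ U := by
    have : ContinuousAt (fun v => f^[l] (e.symm v)) (0 : (Fin r → ℝ) × (Fin (n - r) → ℝ)) :=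
      (f.continuous.iterate l).continuousAt.comp hca
    exact this.eventually (hU.mem_nhds (by beta_reduce; rw [hsy, hfix]; exact hpU))
  have e2 : ∀ᶠ v in 𝓝 (0 : (Fin r → ℝ) × (Fin (n - r) → ℝ)), f.symm^[l] (e.symm v) ∈ U := by
    have : ContinuousAt (fun v => f.symm^[l] (e.symm v)) (0 : (Fin r → ℝ) × (Fin (n - r) → ℝ)) :=
      (f.symm.continuous.iterate l).continuousAt.comp hca
    exact this.eventually (hU.mem_nhds (by beta_reduce; rw [hsy, hfix']; exact hpU))
  obtain ⟨ρ, hρ, hρ'⟩ := Metric.nhds_basis_closedBall.mem_iff.1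
    (inter_mem (inter_mem e1 e2) (hV.mem_nhds hV0))
  have hb : ∀ v : (Fin r → ℝ) × (Fin (n - r) → ℝ), ‖v‖ ≤ ρ →
      (f^[l] (e.symm v) ∈ U ∧ f.symm^[l] (e.symm v) ∈ U) ∧ v ∈ V := fun v hv =>
    hρ' (by simpa using hv)
  have hsU : ∀ v ∈ V, e.symm v ∈ U := fun v hv => e.map_target hv
  refine ⟨l, e, ρ, hl, hfix, hρ, hpU, hep, fun v hv => (hb v hv).2, fun v hv => (hb v hv).1.1,
    fun v hv => ?_, fun v hv => (hb v hv).1.2, fun v hv => ?_⟩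
  · rw [hc _ (hsU v (hb v hv).2) (hb v hv).1.1, e.right_inv (hb v hv).2]
  · have h1 : f^[l] (f.symm^[l] (e.symm v)) = e.symm v := by
      rw [iter_symm_iter f _ _ le_rfl]; simp
    have h2 := hc _ (hb v hv).1.2 (by rw [h1]; exact hsU v (hb v hv).2)
    rw [h1, e.right_inv (hb v hv).2] at h2
    generalize e (f.symm^[l] (e.symm v)) = w at h2
    subst h2
    simp [smul_smul]
end Build
/-- **Proposition (2).** For every `p ∈ Per_H` there are open neighborhoods `V₁, V₂` of `p`
such that every `q ∈ Per_H ∩ V₁` satisfies `S_q ∩ U_p ≠ ∅` and `U_q ∩ S_p ≠ ∅`, where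
`S_z = cc_z(W^s(z) ∩ V₂)` and `U_z = cc_z(W^u(z) ∩ V₂)`. -/
theorem stmt10 {M : Type*} [MetricSpace M] [CompactSpace M] [ConnectedSpace M]
    (n : ℕ) [ChartedSpace (EuclideanSpace ℝ (Fin n)) M]
    (f : M ≃ₜ M) (α : ℝ) (hα : 0 < α) (hexp : IsExpansive f α) :
    ∀ p ∈ PerH f n, ∃ V₁ V₂ : Set M,
      IsOpen V₁ ∧ IsOpen V₂ ∧ p ∈ V₁ ∧ p ∈ V₂ ∧
      ∀ q ∈ PerH f n ∩ V₁,
        (connectedComponentIn (Ws f q ∩ V₂) q ∩ connectedComponentIn (Wu f p ∩ V₂) p).Nonempty ∧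
        (connectedComponentIn (Wu f q ∩ V₂) q ∩ connectedComponentIn (Ws f p ∩ V₂) p).Nonempty := by
  intro p hp
  have hEN := ExpN.of f α hexp
  simp only [PerH, mem_iUnion] at hp
  obtain ⟨r, -, hp⟩ := hp
  obtain ⟨l, e, ρ, h⟩ := exists_HC f n r p hp
  have h1 : ∀ᶠ z in nhds p, z ∈ e.source ∧ ‖e z‖ < ρ := by
    refine Filter.Eventually.and (e.open_source.mem_nhds h.ps) ?_
    have := (e.continuousAt h.ps).norm.eventually
      (gt_mem_nhds (by beta_reduce; rw [h.p0, norm_zero]; exact h.hρ))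
    exact this
  obtain ⟨κ, hκ, hκ'⟩ := Metric.nhds_basis_closedBall.mem_iff.1 h1
  obtain ⟨ε, hε0, hεα, hεκ⟩ : ∃ ε > 0, ε ≤ α ∧ 2 * ε ≤ κ :=
    ⟨min α (κ / 2), lt_min hα (by linarith), min_le_left _ _, by
      linarith [min_le_right α (κ / 2)]⟩
  have hg : ∀ z, dist z p ≤ 2 * ε → z ∈ e.source ∧ ‖e z‖ ≤ ρ := fun z hz => by
    have := hκ' (show z ∈ closedBall p κ from hz.trans hεκ)
    exact ⟨this.1, this.2.le⟩
  have hg' : ∀ z, dist z p ≤ 2 * ε → z ∈ (swapE e).source ∧ ‖swapE e z‖ ≤ ρ := fun z hz => by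
    refine ⟨(hg z hz).1, ?_⟩
    rw [swapE_apply, norm_swap (e z)]
    exact (hg z hz).2
  obtain ⟨cs, hcs, ev1⟩ := h.near2 hEN hεα hε0 hg
  obtain ⟨cu, hcu, ev2⟩ := h.swap.near2 hEN.symm hεα hε0 hg'
  have ev3 := h.near1 hε0 hg cu hcu
  have ev4 := h.swap.near1 hε0 hg' cs hcs
  have ev5 := closedBall_mem_nhds p hε0
  obtain ⟨V₁, hV, hVo, hpV⟩ := _root_.mem_nhds_iff.1 (ev1.and (ev2.and (ev3.and (ev4.and ev5))))
  refine ⟨V₁, univ, hVo, isOpen_univ, hpV, mem_univ _, ?_⟩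
  rintro q ⟨hq, hqV⟩
  obtain ⟨w1, w2, w3, w4, w5⟩ := hV hqV
  simp only [PerH, mem_iUnion] at hq
  obtain ⟨r', -, hq⟩ := hq
  obtain ⟨m, e', ρ', hq⟩ := exists_HC f n r' q hq
  obtain ⟨N, a, b, ha, hb, sa, sb, za, zb⟩ := core (p := p) (e := e) (ρ := ρ) hq hEN hεα hε0 hg w5
    w1 w2 w3 w4
  have ga := hg _ (HC.near_ball q _ w5 sa)
  have gb := hg _ (HC.near_ball (f := f.symm) q _ w5 sb)
  rw [Wu_eq, Wu_eq]
  constructor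
  · refine ⟨_, hq.psi_comp N a ha, ?_⟩
    have h2 := h.swap.disc_comp _ ((norm_snd_le _).trans ga.2)
    rw [swapE_symm_apply, ← za] at h2
    rwa [show ((e (psi f m N e' a)).1, (e (psi f m N e' a)).2) = e (psi f m N e' a) from rfl,
      e.left_inv ga.1] at h2
  · refine ⟨_, hq.swap.psi_comp N b hb, ?_⟩
    have h2 := h.disc_comp _ ((norm_fst_le _).trans gb.2)
    rw [← zb] at h2
    exact (e.left_inv gb.1) ▸ h2
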